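/- For every natural number N and every compact set K contained in the open unit disc 𝔻 ⊂ ℝ², there exists a constant C₁ = C₁(K, N) > 0 with the following property: whenever u and v are harmonic functions on 𝔻, neither identically zero, such that Z(u) = Z(v) and the number of connected components of 𝔻 ∖ Z(u) is less than N, then sup_{x ∈ K ∖ Z(u)} |u(x)/v(x)| ≤ C₁ · inf_{x ∈ K ∖ Z(u)} |u(x)/v(x)|. -/

import Mathlib

open Metric Set Filter

noncomputable section

abbrev En (n : ℕ) : Type := EuclideanSpace ℝ (Fin n)

/-- The Laplacian of `u` at `x`, computed from the second iterated Fréchet derivative. -/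
def laplacianAt {n : ℕ} (u : En n → ℝ) (x : En n) : ℝ :=
  ∑ i : Fin n, iteratedFDeriv ℝ 2 u x ![EuclideanSpace.single i 1, EuclideanSpace.single i 1]

/-- `u` is harmonic on `Ω`: twice continuously differentiable with vanishing Laplacian. -/
def HarmonicOnSet {n : ℕ} (u : En n → ℝ) (Ω : Set (En n)) : Prop :=
  ContDiffOn ℝ 2 u Ω ∧ ∀ x ∈ Ω, laplacianAt u x = 0

/-- The zero set of `u` within `Ω`. -/
def zeroSet {n : ℕ} (u : En n → ℝ) (Ω : Set (En n)) : Set (En n) :=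
  {x ∈ Ω | u x = 0}

/-- The collection of nodal domains of `u` in `Ω`, i.e. the connected components of
`Ω \ Z(u)`. -/
def nodalComponents {n : ℕ} (u : En n → ℝ) (Ω : Set (En n)) : Set (Set (En n)) :=
  {C | ∃ x ∈ Ω \ zeroSet u Ω, C = connectedComponentIn (Ω \ zeroSet u Ω) x}

section
open Complex Topology

/-- A weak form of Bloch's theorem: if the image of a disc of radius `R` under a holomorphic map
contains no disc of radius `ρ`, then the derivative at the centre is at most `96 * ρ / R`. -/
theorem norm_deriv_le_of_no_ball_subset_image {g : ℂ → ℂ} {a : ℂ} {R ρ : ℝ} (hR : 0 < R)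
    (hg : DifferentiableOn ℂ g (ball a R))
    (hρ : ∀ w, ∃ w' ∈ ball w ρ, ∀ z ∈ ball a R, g z ≠ w') :
    ‖deriv g a‖ ≤ 96 * ρ / R := by
  by_contra! hlt
  have hρ0 : 0 < ρ := by
    obtain ⟨w', hw', -⟩ := hρ 0
    exact pos_of_mem_ball hw'
  have hdg : DifferentiableOn ℂ (deriv g) (ball a R) := hg.deriv isOpen_ball
  have hsub : closedBall a (R / 2) ⊆ ball a R := closedBall_subset_ball (by linarith)
  obtain ⟨p, hp, hmax⟩ := (isCompact_closedBall a (R / 2)).exists_isMaxOn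
    (f := fun z => (R / 2 - dist z a) * ‖deriv g z‖) ⟨a, by simp; positivity⟩
    (ContinuousOn.mul (by fun_prop) (hdg.continuousOn.mono hsub).norm)
  have hpa := hmax (show a ∈ closedBall a (R / 2) by simp; positivity)
  simp only [dist_self, sub_zero, mem_ofPred_eq] at hpa
  set m := ‖deriv g p‖ with hm
  set s := (R / 2 - dist p a) / 2 with hs
  have hM : 48 * ρ < (R / 2 - dist p a) * m := by
    refine lt_of_lt_of_le ?_ hpa
    rw [div_lt_iff₀ hR] at hlt
    linarith
  have hs0 : 0 < s := by
    have : dist p a ≤ R / 2 := hp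
    rcases this.lt_or_eq with h | h
    · rw [hs]; linarith
    · rw [h] at hM; simp at hM; linarith
  have hm0 : 0 < m := by
    by_contra h
    have : m = 0 := le_antisymm (not_lt.1 h) (norm_nonneg _)
    rw [this] at hM; simp at hM; linarith
  have hballs : ball p s ⊆ closedBall a (R / 2) := fun z hz => by
    have h1 : dist z p < s := hz
    have h2 := dist_triangle z p a
    rw [mem_closedBall]
    linarith [dist_nonneg (x := p) (y := a)]
  have hballs' : ball p s ⊆ ball a R := hballs.trans hsub
  have hbd : ∀ z ∈ ball p s, ‖deriv g z‖ ≤ 2 * m := fun z hz => by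
    have h1 : dist z p < s := hz
    have h2 := dist_triangle z p a
    have h3 := hmax (hballs hz)
    simp only [mem_ofPred_eq] at h3
    have h4 : s * ‖deriv g z‖ ≤ 2 * s * m := by
      calc s * ‖deriv g z‖ ≤ (R / 2 - dist z a) * ‖deriv g z‖ := by
            gcongr; linarith
        _ ≤ _ := h3
        _ = _ := by rw [hs, hm]; ring
    nlinarith
  have hschwarz : ∀ z ∈ ball p s, ‖deriv g z - deriv g p‖ ≤ 3 * m / s * dist z p := fun z hz => by
    have := dist_le_div_mul_dist_of_mapsTo_ball (f := deriv g) (R₂ := 3 * m) (hdg.mono hballs')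
      (fun w hw => by
        rw [mem_closedBall, dist_eq_norm]
        calc _ ≤ ‖deriv g w‖ + ‖deriv g p‖ := norm_sub_le _ _
          _ ≤ 2 * m + m := by gcongr; exact hbd w hw
          _ = _ := by ring) hz
    rwa [dist_eq_norm] at this
  have hmvt : ∀ z ∈ sphere p (s / 6), m * s / 12 ≤ ‖g z - g p‖ := fun z hz => by
    have hz' : dist z p = s / 6 := hz
    have hder : ∀ w ∈ closedBall p (s / 6),
        HasDerivWithinAt (fun w => g w - (w - p) * deriv g p) (deriv g w - deriv g p)
          (closedBall p (s / 6)) w := fun w hw => by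
      have hw' : w ∈ ball a R := hballs' (closedBall_subset_ball (by linarith) hw)
      have h1 : HasDerivAt g (deriv g w) w :=
        (hg.differentiableAt (isOpen_ball.mem_nhds hw')).hasDerivAt
      have h2 : HasDerivAt (fun w : ℂ => (w - p) * deriv g p) (1 * deriv g p) w :=
        ((hasDerivAt_id w).sub_const p).mul_const _
      have h3 := (h1.fun_sub h2).hasDerivWithinAt (s := closedBall p (s / 6))
      rwa [one_mul] at h3
    have := (convex_closedBall p (s / 6)).norm_image_sub_le_of_norm_hasDerivWithin_le
      (C := m / 2) hder (fun w hw => by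
        have hw' : dist w p ≤ s / 6 := hw
        refine (hschwarz w (closedBall_subset_ball (by linarith) hw)).trans ?_
        calc 3 * m / s * dist w p ≤ 3 * m / s * (s / 6) := by gcongr
          _ = _ := by field_simp; norm_num)
      (mem_closedBall_self (by positivity)) (mem_closedBall.2 hz'.le)
    rw [← dist_eq_norm z p, hz'] at this
    have h3 : ‖(z - p) * deriv g p‖ = s / 6 * m := by
      rw [norm_mul, ← dist_eq_norm, hz']
    have h4 : (z - p) * deriv g p = (g z - g p) -
      (g z - (z - p) * deriv g p - (g p - (p - p) * deriv g p)) := by ring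
    have h5 := norm_sub_le (g z - g p) (g z - (z - p) * deriv g p - (g p - (p - p) * deriv g p))
    rw [← h4, h3] at h5
    linarith
  have hsub6 : closedBall p (s / 6) ⊆ ball a R :=
    (closedBall_subset_ball (by linarith)).trans hballs'
  have hpR : p ∈ ball a R := hsub hp
  have key := DiffContOnCl.ball_subset_image_closedBall (f := g) (z₀ := p) (r := s / 6)
    (ε := m * s / 12) ((hg.mono hsub6).diffContOnCl_ball Subset.rfl) (by positivity) hmvt (by
      have hd : HasDerivAt g (deriv g p) p :=
        (hg.differentiableAt (isOpen_ball.mem_nhds hpR)).hasDerivAt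
      exact (hd.eventually_ne (norm_pos_iff.1 hm0)).frequently.filter_mono nhdsWithin_le_nhds)
  obtain ⟨w', hw', hom⟩ := hρ (g p)
  have : ball (g p) ρ ⊆ ball (g p) (m * s / 12 / 2) := by
    apply ball_subset_ball
    rw [hs]; linarith
  obtain ⟨z, hz, hzw⟩ := key (this hw')
  exact hom z (hsub6 hz) hzw

/-- A nonvanishing holomorphic function on a disc has a holomorphic logarithm with prescribed
value at the centre. -/
theorem exists_log_on_ball {f : ℂ → ℂ} {a w : ℂ} {R : ℝ} (hR : 0 < R)
    (hf : DifferentiableOn ℂ f (ball a R)) (h0 : ∀ z ∈ ball a R, f z ≠ 0) (hw : exp w = f a) :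
    ∃ g : ℂ → ℂ, DifferentiableOn ℂ g (ball a R) ∧ g a = w ∧ ∀ z ∈ ball a R, exp (g z) = f z := by
  have hq : DifferentiableOn ℂ (fun z => deriv f z / f z) (ball a R) :=
    (hf.deriv isOpen_ball).div hf h0
  obtain ⟨g, hga, hg⟩ := hq.isExactOn_ball.with_val_at a w
  refine ⟨g, fun z hz => (hg z hz).differentiableAt.differentiableWithinAt, hga, fun z hz => ?_⟩
  have hder : ∀ z ∈ ball a R, HasDerivAt (fun z => f z * exp (-g z)) 0 z := fun z hz => by
    have h1 : HasDerivAt f (deriv f z) z :=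
      (hf.differentiableAt (isOpen_ball.mem_nhds hz)).hasDerivAt
    have h2 := h1.fun_mul ((hg z hz).fun_neg.cexp)
    have h3 : deriv f z * cexp (-g z) + f z * (cexp (-g z) * -(deriv f z / f z)) = 0 := by
      have := h0 z hz
      field_simp
      ring
    rwa [h3] at h2
  have hconst := (isOpen_ball : IsOpen (ball a R)).is_const_of_deriv_eq_zero
    (convex_ball a R).isPreconnected
    (fun z hz => (hder z hz).differentiableAt.differentiableWithinAt)
    (fun z hz => (hder z hz).deriv) hz (mem_ball_self hR)
  simp only [hga, exp_neg, hw, mul_inv_cancel₀ (h0 a (mem_ball_self hR))] at hconst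
  field_simp at hconst
  exact hconst.symm

/-- The points at which `cosh ^ 2` takes a natural value form a net in the plane. -/
theorem exists_mem_ball_cosh_sq_eq_natCast (w : ℂ) :
    ∃ w' ∈ ball w 3, ∃ n : ℕ, cosh w' ^ 2 = n := by
  wlog hw : 0 ≤ w.re generalizing w
  · obtain ⟨w', hw', n, hn⟩ := this (-w) (by rw [neg_re]; linarith)
    refine ⟨-w', ?_, n, by rw [cosh_neg]; exact hn⟩
    rw [mem_ball, dist_eq_norm] at hw' ⊢
    have e : w' - -w = -(-w' - w) := by ring
    rwa [e, norm_neg] at hw'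
  have h1 : Real.cosh w.re ^ 2 + 1 ≤ Real.cosh (w.re + 1) ^ 2 := by
    have e : Real.cosh (w.re + 1) ^ 2 - Real.cosh w.re ^ 2 =
        Real.sinh 1 ^ 2 * (Real.cosh w.re ^ 2 + Real.sinh w.re ^ 2) +
        2 * Real.cosh w.re * Real.sinh w.re * Real.cosh 1 * Real.sinh 1 := by
      rw [Real.cosh_add]
      have := Real.cosh_sq 1
      linear_combination Real.cosh w.re ^ 2 * this
    have h2 : 1 ≤ Real.sinh 1 := Real.self_le_sinh_iff.2 zero_le_one
    have h3 : 0 ≤ Real.sinh w.re := Real.sinh_nonneg_iff.2 hw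
    have h4 := Real.one_le_cosh w.re
    have h5 := Real.one_le_cosh 1
    have h6 : 1 ≤ Real.sinh 1 ^ 2 * (Real.cosh w.re ^ 2 + Real.sinh w.re ^ 2) := by
      nlinarith [one_le_pow₀ h2 (n := 2), one_le_pow₀ h4 (n := 2), sq_nonneg (Real.sinh w.re)]
    have h7 : 0 ≤ 2 * Real.cosh w.re * Real.sinh w.re * Real.cosh 1 * Real.sinh 1 := by positivity
    linarith
  obtain ⟨t, ⟨ht1, ht2⟩, ht⟩ := intermediate_value_Icc (f := fun t => Real.cosh t ^ 2)
    (show w.re ≤ w.re + 1 by linarith) (by fun_prop)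
    (show (⌈Real.cosh w.re ^ 2⌉₊ : ℝ) ∈ Icc (Real.cosh w.re ^ 2) (Real.cosh (w.re + 1) ^ 2) from
      ⟨Nat.le_ceil _, (Nat.ceil_lt_add_one (by positivity)).le.trans h1⟩)
  set m : ℤ := round (w.im / Real.pi) with hm
  refine ⟨t + (m * Real.pi : ℝ) * I, ?_, ⌈Real.cosh w.re ^ 2⌉₊, ?_⟩
  · rw [mem_ball, dist_eq_norm]
    refine (norm_le_abs_re_add_abs_im _).trans_lt ?_
    have h3 : |(m * Real.pi : ℝ) - w.im| ≤ Real.pi / 2 := by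
      have := abs_sub_round (w.im / Real.pi)
      rw [abs_sub_comm, ← hm] at this
      have e : (m * Real.pi : ℝ) - w.im = (m - w.im / Real.pi) * Real.pi := by
        field_simp
      rw [e, abs_mul, abs_of_pos Real.pi_pos]
      nlinarith [Real.pi_pos]
    have h4 : |t - w.re| ≤ 1 := by rw [abs_le]; constructor <;> linarith
    have := Real.pi_lt_four
    simp only [sub_re, add_re, ofReal_re, re_ofReal_mul, I_re, mul_zero, add_zero, sub_im, add_im,
      ofReal_im, im_ofReal_mul, I_im, mul_one, zero_add]
    linarith
  · have e1 : sin (m * Real.pi) = 0 := sin_int_mul_pi m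
    have e2 := sin_sq_add_cos_sq (m * Real.pi : ℂ)
    rw [cosh_add, cosh_mul_I, sinh_mul_I]
    push_cast
    rw [e1]
    rw [e1] at e2
    have e3 : cosh (t : ℂ) ^ 2 = (⌈Real.cosh w.re ^ 2⌉₊ : ℂ) := by
      exact_mod_cast congrArg ((↑) : ℝ → ℂ) ht
    linear_combination cosh (t : ℂ) ^ 2 * e2 + e3

theorem norm_cosh_le (z : ℂ) : ‖cosh z‖ ≤ Real.exp |z.re| := by
  have h1 := norm_exp z
  have h2 := norm_exp (-z)
  have h3 : Real.exp z.re ≤ Real.exp |z.re| := Real.exp_le_exp.2 (le_abs_self _)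
  have h4 : Real.exp (-z).re ≤ Real.exp |z.re| := Real.exp_le_exp.2 (neg_le_abs _)
  have h5 := norm_add_le (exp z) (exp (-z))
  rw [cosh, norm_div]
  norm_num
  linarith

theorem abs_log_le_add_inv {x : ℝ} (hx : 0 < x) : |Real.log x| ≤ x + x⁻¹ := by
  have h1 := Real.log_le_sub_one_of_pos hx
  have h2 := Real.log_le_sub_one_of_pos (inv_pos.2 hx)
  have h3 := inv_pos.2 hx
  rw [Real.log_inv] at h2
  rw [abs_le]; constructor <;> linarith

/-- Schottky's theorem when the value at the centre is bounded away from `0`. -/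
theorem schottky_aux (A : ℝ) : ∃ B : ℝ, ∀ (a : ℂ) (R : ℝ), 0 < R → ∀ f : ℂ → ℂ,
    DifferentiableOn ℂ f (ball a R) → (∀ z ∈ ball a R, f z ≠ 0 ∧ f z ≠ 1) → ‖f a‖ ≤ A →
    1 / 2 ≤ ‖f a‖ → ∀ z ∈ ball a (R / 2), ‖f z‖ ≤ B := by
  refine ⟨Real.exp (2 * Real.pi * Real.exp (4 * (A + 7) + 288) ^ 2), ?_⟩
  intro a R hR f hf hom hA hA' z hz
  have haR : a ∈ ball a R := mem_ball_self hR
  have hfa := (hom a haR).1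
  obtain ⟨l, hl, hla, hlf⟩ := exists_log_on_ball hR hf (fun z hz => (hom z hz).1) (exp_log hfa)
  have hpi : (2 * Real.pi * I : ℂ) ≠ 0 := two_pi_I_ne_zero
  set φ : ℂ → ℂ := fun z => l z / (2 * Real.pi * I) with hφ
  have hφl : ∀ z, l z = 2 * Real.pi * I * φ z := fun z => by rw [hφ]; field_simp
  have hφd : DifferentiableOn ℂ φ (ball a R) := hl.div_const _
  have hφn : ∀ z ∈ ball a R, ∀ n : ℕ, φ z ≠ n := by
    intro z hz n hn
    refine (hom z hz).2 ?_
    rw [← hlf z hz, hφl, hn, mul_comm]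
    exact exp_nat_mul_two_pi_mul_I n
  have hφa : ‖φ a‖ ≤ A + 6 := by
    have h1 : ‖l a‖ ≤ A + 6 := by
      rw [hla]
      refine (norm_le_abs_re_add_abs_im _).trans ?_
      rw [log_re, log_im]
      have h2 := abs_log_le_add_inv (show 0 < ‖f a‖ by linarith)
      have h3 : ‖f a‖⁻¹ ≤ 2 := by
        rw [inv_le_comm₀ (by linarith) (by norm_num)]; linarith
      have h4 := abs_arg_le_pi (f a)
      have := Real.pi_le_four
      linarith
    rw [hφ]
    simp only [norm_div]
    refine (div_le_self (norm_nonneg _) ?_).trans h1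
    simp only [norm_mul, norm_I, norm_real, Real.norm_eq_abs, abs_of_pos Real.pi_pos]
    norm_num
    linarith [Real.pi_gt_three]
  have h0 : ∀ z ∈ ball a R, φ z ≠ 0 := fun z hz => by simpa using hφn z hz 0
  have h1 : ∀ z ∈ ball a R, φ z - 1 ≠ 0 := fun z hz => sub_ne_zero.2 (by simpa using hφn z hz 1)
  obtain ⟨l1, hl1, -, hl1e⟩ := exists_log_on_ball hR hφd h0 (exp_log (h0 a haR))
  obtain ⟨l2, hl2, -, hl2e⟩ := exists_log_on_ball hR (hφd.sub_const 1) h1 (exp_log (h1 a haR))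
  set s1 : ℂ → ℂ := fun z => exp (l1 z / 2) with hs1
  set s2 : ℂ → ℂ := fun z => exp (l2 z / 2) with hs2
  have hs1sq : ∀ z ∈ ball a R, s1 z ^ 2 = φ z := fun z hz => by
    rw [hs1, ← hl1e z hz]; simp only; rw [← exp_nat_mul]; congr 1; push_cast; ring
  have hs2sq : ∀ z ∈ ball a R, s2 z ^ 2 = φ z - 1 := fun z hz => by
    rw [hs2, ← hl2e z hz]; simp only; rw [← exp_nat_mul]; congr 1; push_cast; ring
  have hprod : ∀ z ∈ ball a R, (s1 z - s2 z) * (s1 z + s2 z) = 1 := fun z hz => by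
    linear_combination hs1sq z hz - hs2sq z hz
  have hhd : DifferentiableOn ℂ (fun z => s1 z - s2 z) (ball a R) :=
    ((hl1.div_const 2).cexp).sub ((hl2.div_const 2).cexp)
  have hh0 : ∀ z ∈ ball a R, s1 z - s2 z ≠ 0 := fun z hz => left_ne_zero_of_mul_eq_one (hprod z hz)
  obtain ⟨ψ, hψd, -, hψ⟩ := exists_log_on_ball hR hhd hh0 (exp_log (hh0 a haR))
  have hcosh : ∀ z ∈ ball a R, cosh (ψ z) ^ 2 = φ z := fun z hz => by
    rw [← hs1sq z hz, cosh, exp_neg, hψ z hz, inv_eq_of_mul_eq_one_right (hprod z hz)]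
    ring
  have hderiv : ∀ z ∈ ball a (R / 2), ‖deriv ψ z‖ ≤ 576 / R := fun z hz => by
    have hsub : ball z (R / 2) ⊆ ball a R := by
      apply ball_subset_ball'
      rw [mem_ball] at hz
      linarith
    have := norm_deriv_le_of_no_ball_subset_image (half_pos hR) (hψd.mono hsub) (ρ := 3)
      (fun w => by
        obtain ⟨w', hw', n, hn⟩ := exists_mem_ball_cosh_sq_eq_natCast w
        exact ⟨w', hw', fun y hy hyw => hφn y (hsub hy) n (by rw [← hcosh y (hsub hy), hyw, hn])⟩)
    refine this.trans (le_of_eq ?_)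
    field_simp
    norm_num
  have hRsub : ball a (R / 2) ⊆ ball a R := ball_subset_ball (by linarith)
  have hψz : ‖ψ z - ψ a‖ ≤ 288 := by
    have := (convex_ball a (R / 2)).norm_image_sub_le_of_norm_deriv_le
      (fun y hy => hψd.differentiableAt (isOpen_ball.mem_nhds (hRsub hy))) hderiv
      (mem_ball_self (half_pos hR)) hz
    refine this.trans ?_
    rw [mem_ball, dist_eq_norm] at hz
    calc 576 / R * ‖z - a‖ ≤ 576 / R * (R / 2) := by gcongr
      _ = 288 := by field_simp; norm_num
  have hb1 : ‖s1 a‖ ≤ A + 7 := by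
    have : ‖s1 a‖ ^ 2 ≤ A + 6 := by rw [← norm_pow, hs1sq a haR]; exact hφa
    nlinarith [norm_nonneg (φ a)]
  have hb2 : ‖s2 a‖ ≤ A + 7 := by
    have : ‖s2 a‖ ^ 2 ≤ A + 7 := by
      rw [← norm_pow, hs2sq a haR]
      refine (norm_sub_le _ _).trans ?_
      rw [norm_one]; linarith
    nlinarith [norm_nonneg (φ a)]
  have hψa : |(ψ a).re| ≤ 4 * (A + 7) := by
    have e : (ψ a).re = Real.log ‖s1 a - s2 a‖ := by
      rw [← hψ a haR, norm_exp, Real.log_exp]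
    rw [e]
    refine (abs_log_le_add_inv (norm_pos_iff.2 (hh0 a haR))).trans ?_
    rw [← norm_inv, inv_eq_of_mul_eq_one_right (hprod a haR)]
    linarith [norm_sub_le (s1 a) (s2 a), norm_add_le (s1 a) (s2 a)]
  have hre : |(ψ z).re| ≤ 4 * (A + 7) + 288 := by
    have h2 := (abs_re_le_norm (ψ z - ψ a)).trans hψz
    rw [sub_re] at h2
    have := abs_sub_abs_le_abs_sub (ψ z).re (ψ a).re
    linarith
  have hzR := hRsub hz
  have hφz : ‖φ z‖ ≤ Real.exp (4 * (A + 7) + 288) ^ 2 := by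
    rw [← hcosh z hzR, norm_pow]
    gcongr
    exact (norm_cosh_le _).trans (Real.exp_le_exp.2 hre)
  rw [← hlf z hzR, norm_exp]
  apply Real.exp_le_exp.2
  refine (re_le_norm _).trans ?_
  rw [hφl, norm_mul]
  have : ‖(2 * Real.pi * I : ℂ)‖ = 2 * Real.pi := by
    simp [abs_of_pos Real.pi_pos]
  rw [this]
  gcongr

/-- **Schottky's theorem**: a holomorphic function on a disc omitting `0` and `1` is bounded on the
disc of half the radius in terms of its value at the centre. -/
theorem schottky (A : ℝ) : ∃ B : ℝ, ∀ (a : ℂ) (R : ℝ), 0 < R → ∀ f : ℂ → ℂ,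
    DifferentiableOn ℂ f (ball a R) → (∀ z ∈ ball a R, f z ≠ 0 ∧ f z ≠ 1) → ‖f a‖ ≤ A →
    ∀ z ∈ ball a (R / 2), ‖f z‖ ≤ B := by
  obtain ⟨B, hB⟩ := schottky_aux (A + 1)
  refine ⟨B + 1, fun a R hR f hf hom hA z hz => ?_⟩
  by_cases h : 1 / 2 ≤ ‖f a‖
  · linarith [hB a R hR f hf hom (by linarith) h z hz]
  · have h1 : 1 - ‖f a‖ ≤ ‖1 - f a‖ := by simpa using norm_sub_norm_le 1 (f a)
    have h2 : ‖1 - f a‖ ≤ 1 + ‖f a‖ := by simpa using norm_sub_le 1 (f a)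
    have := hB a R hR (fun z => 1 - f z) (hf.const_sub 1)
      (fun z hz => ⟨sub_ne_zero.2 (hom z hz).2.symm, fun e => (hom z hz).1 (by simpa using e)⟩)
      (by linarith) (by linarith) z hz
    have h3 : ‖f z‖ ≤ 1 + ‖1 - f z‖ := by
      have := norm_sub_le 1 (1 - f z)
      simpa using this
    linarith

/-- Schottky's theorem propagated along a compact connected set. -/
theorem schottky_of_isPreconnected {K : Set ℂ} (hK : IsCompact K) (hKc : IsPreconnected K) {δ : ℝ}
    (hδ : 0 < δ) {x₀ : ℂ} (hx₀ : x₀ ∈ K) (A : ℝ) : ∃ B : ℝ, ∀ f : ℂ → ℂ,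
    (∀ x ∈ K, DifferentiableOn ℂ f (ball x δ) ∧ ∀ z ∈ ball x δ, f z ≠ 0 ∧ f z ≠ 1) →
    ‖f x₀‖ ≤ A → ∀ y ∈ K, ‖f y‖ ≤ B := by
  let H : (ℂ → ℂ) → Prop := fun f =>
    ∀ x ∈ K, DifferentiableOn ℂ f (ball x δ) ∧ ∀ z ∈ ball x δ, f z ≠ 0 ∧ f z ≠ 1
  let P : ℂ → ℂ → Prop := fun x y => ∀ A : ℝ, ∃ B : ℝ, ∀ f, H f → ‖f x‖ ≤ A → ‖f y‖ ≤ B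
  have hP : ∀ y ∈ K, P x₀ y := fun y hy => by
    refine hKc.induction₂' P (fun x hx => ?_) (fun x y z hx hy hz h1 h2 A => ?_) hx₀ hy
    · filter_upwards [inter_mem_nhdsWithin K (ball_mem_nhds x (half_pos hδ))] with z hz
      refine ⟨fun A => ?_, fun A => ?_⟩
      · obtain ⟨B, hB⟩ := schottky A
        exact ⟨B, fun f hf hA => hB x δ hδ f (hf x hx).1 (hf x hx).2 hA z hz.2⟩
      · obtain ⟨B, hB⟩ := schottky A
        exact ⟨B, fun f hf hA => hB z δ hδ f (hf z hz.1).1 (hf z hz.1).2 hA x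
          (mem_ball_comm.1 hz.2)⟩
    · obtain ⟨B, hB⟩ := h1 A
      obtain ⟨C, hC⟩ := h2 B
      exact ⟨C, fun f hf hA => hC f hf (hB f hf hA)⟩
  refine hK.induction_on (p := fun S => ∃ B : ℝ, ∀ f, H f → ‖f x₀‖ ≤ A → ∀ y ∈ S, ‖f y‖ ≤ B)
    ⟨0, fun f _ _ y hy => hy.elim⟩ ?_ ?_ ?_
  · rintro S T hST ⟨B, hB⟩
    exact ⟨B, fun f hf hA y hy => hB f hf hA y (hST hy)⟩
  · rintro S T ⟨B, hB⟩ ⟨C, hC⟩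
    refine ⟨max B C, fun f hf hA y hy => ?_⟩
    rcases hy with hy | hy
    · exact (hB f hf hA y hy).trans (le_max_left _ _)
    · exact (hC f hf hA y hy).trans (le_max_right _ _)
  · intro x hx
    obtain ⟨B, hB⟩ := hP x hx A
    obtain ⟨C, hC⟩ := schottky B
    exact ⟨_, mem_nhdsWithin_of_mem_nhds (ball_mem_nhds x (half_pos hδ)), C, fun f hf hA y hy =>
      hC x δ hδ f (hf x hx).1 (hf x hx).2 (hB f hf hA) y hy⟩

/-- Among more than `n` disjoint compact sets, one stays uniformly away from any given `n` points. -/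
theorem exists_forall_le_dist_of_disjoint {ι : Type} [Fintype ι] {K : ι → Set ℂ}
    (hK : ∀ i, IsCompact (K i)) (hd : Pairwise fun i j => Disjoint (K i) (K j)) :
    ∃ δ > 0, ∀ P : Finset ℂ, P.card < Fintype.card ι → ∃ i, ∀ x ∈ K i, ∀ p ∈ P, δ ≤ dist x p := by
  have h : ∀ᶠ δ in 𝓝[>] (0 : ℝ), ∀ i j, i ≠ j →
      Disjoint (thickening δ (K i)) (thickening δ (K j)) := by
    refine eventually_all.2 fun i => eventually_all.2 fun j => eventually_imp_distrib_left.2 ?_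
    intro hij
    obtain ⟨δ, hδ, hdis⟩ := (hd hij).exists_thickenings (hK i) (hK j).isClosed
    filter_upwards [Ioo_mem_nhdsGT hδ] with ε hε
    exact hdis.mono (thickening_mono hε.2.le _) (thickening_mono hε.2.le _)
  obtain ⟨δ, hδ, hδ0⟩ := (h.and self_mem_nhdsWithin).exists
  refine ⟨δ, hδ0, fun P hP => ?_⟩
  by_contra! hcon
  choose x hx p hp hxp using hcon
  have hmem : ∀ i, p i ∈ thickening δ (K i) := fun i =>
    mem_thickening_iff.2 ⟨x i, hx i, by rw [dist_comm]; exact hxp i⟩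
  have hinj : Function.Injective p := fun i j hij => by
    by_contra hne
    exact disjoint_left.1 (hδ i j hne) (hmem i) (hij ▸ hmem j)
  have : Fintype.card ι ≤ Fintype.card P :=
    Fintype.card_le_of_injective (fun i => (⟨p i, hp i⟩ : P)) fun i j hij =>
      hinj (congrArg Subtype.val hij)
  rw [Fintype.card_coe] at this
  omega

theorem injective_exp_inv_succ_mul_I : Function.Injective fun k : ℕ => exp (((k + 1 : ℝ)⁻¹ : ℝ) * I) := by
  have key : ∀ k : ℕ, log (exp (((k + 1 : ℝ)⁻¹ : ℝ) * I)) = ((k + 1 : ℝ)⁻¹ : ℝ) * I := fun k => by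
    have h1 : (0 : ℝ) < (k + 1 : ℝ)⁻¹ := by positivity
    have h2 : (k + 1 : ℝ)⁻¹ ≤ 1 := inv_le_one_of_one_le₀ (by linarith [k.cast_nonneg (α := ℝ)])
    have := Real.pi_gt_three
    apply log_exp
    · rw [im_ofReal_mul, I_im]; linarith
    · rw [im_ofReal_mul, I_im]; linarith
  intro k l hkl
  have h := congrArg log hkl
  simp only [key] at h
  have h1 := mul_right_cancel₀ I_ne_zero h
  have h2 := inv_injective (ofReal_injective h1)
  exact_mod_cast add_right_cancel h2

/-- A holomorphic function on the disc taking the values `0` and `1` at most `n` times is bounded on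
a large disc in terms of its bound on a small disc. -/
theorem exists_bound_of_omits_off_finset (n : ℕ) {r R : ℝ} (hr : 0 < r) (hrR : r ≤ R) (hR : R < 1)
    (A : ℝ) : ∃ B : ℝ, ∀ f : ℂ → ℂ, DifferentiableOn ℂ f (ball 0 1) → ∀ P : Finset ℂ, P.card ≤ n →
    (∀ z ∈ ball (0 : ℂ) 1, z ∉ P → f z ≠ 0 ∧ f z ≠ 1) → (∀ z ∈ ball (0 : ℂ) r, ‖f z‖ ≤ A) →
    ∀ z ∈ ball (0 : ℂ) R, ‖f z‖ ≤ B := by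
  let ρ : ℕ → ℝ := fun j => 1 - (1 - R) / (j + 2)
  have hρmono : ∀ i j : ℕ, i ≤ j → ρ i ≤ ρ j := fun i j hij => by
    have h1 : (0 : ℝ) ≤ 1 - R := by linarith
    have h2 : (i : ℝ) ≤ j := by exact_mod_cast hij
    simp only [ρ]
    gcongr
  have hρinj : Function.Injective ρ := fun i j hij => by
    have h1 : (1 - R) ≠ 0 := by linarith
    have h2 : (1 - R) / (i + 2) = (1 - R) / (j + 2) := by simp only [ρ] at hij; linarith
    have h3 : (0 : ℝ) < i + 2 := by positivity
    have h4 : (0 : ℝ) < j + 2 := by positivity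
    rw [div_eq_div_iff h3.ne' h4.ne'] at h2
    have h5 := mul_left_cancel₀ h1 h2
    have : (i : ℝ) = j := by linarith
    exact_mod_cast this
  have hρ1 : ∀ j, ρ j < 1 := fun j => by
    have h1 : (0 : ℝ) < 1 - R := by linarith
    have : 0 < (1 - R) / (j + 2) := by positivity
    simp only [ρ]; linarith
  have hρR : ∀ j, R < ρ j := fun j => by
    have h1 : (0 : ℝ) < 1 - R := by linarith
    have h2 : (1 - R) / (j + 2) ≤ (1 - R) / 2 := by
      gcongr; linarith [j.cast_nonneg (α := ℝ)]
    simp only [ρ]; linarith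
  let α : ℕ → ℂ := fun k => exp (((k + 1 : ℝ)⁻¹ : ℝ) * I)
  have hα : ∀ k, ‖α k‖ = 1 := fun k => norm_exp_ofReal_mul_I _
  let ray : Fin (n + 1) → Set ℂ := fun i => (fun t : ℝ => (t : ℂ) * α i) '' Icc (r / 2) (ρ n)
  let circ : Fin (n + 1) → Set ℂ := fun j => sphere 0 (ρ j)
  have hrayc : ∀ i, IsCompact (ray i) := fun i => isCompact_Icc.image (by fun_prop)
  have hraycn : ∀ i, IsPreconnected (ray i) := fun i =>
    isPreconnected_Icc.image _ (by fun_prop)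
  have hcircc : ∀ j, IsCompact (circ j) := fun j => isCompact_sphere 0 _
  have hcirccn : ∀ j, IsPreconnected (circ j) := fun j =>
    isPreconnected_sphere (by rw [rank_real_complex]; norm_num) 0 _
  have hnormray : ∀ t ∈ Icc (r / 2) (ρ n), ∀ i, ‖(t : ℂ) * α i‖ = t := fun t ht i => by
    rw [norm_mul, hα, mul_one, norm_real, Real.norm_of_nonneg (by linarith [ht.1])]
  have hrayd : Pairwise fun i j => Disjoint (ray i) (ray j) := fun i j hij => by
    refine disjoint_left.2 ?_
    rintro _ ⟨t, ht, rfl⟩ ⟨s, hs, hst⟩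
    have h1 := congrArg norm hst
    simp only [hnormray t ht, hnormray s hs] at h1
    subst h1
    have h2 : (s : ℂ) ≠ 0 := ofReal_ne_zero.2 (by linarith [ht.1])
    exact hij (Fin.ext (injective_exp_inv_succ_mul_I (mul_left_cancel₀ h2 hst).symm))
  have hcircd : Pairwise fun i j => Disjoint (circ i) (circ j) := fun i j hij => by
    refine disjoint_left.2 fun z hz hz' => hij (Fin.ext (hρinj ?_))
    rw [← mem_sphere.1 hz, ← mem_sphere.1 hz']
  obtain ⟨δ₁, hδ₁, h1⟩ := exists_forall_le_dist_of_disjoint hrayc hrayd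
  obtain ⟨δ₂, hδ₂, h2⟩ := exists_forall_le_dist_of_disjoint hcircc hcircd
  have hδ₃ : 0 < 1 - ρ n := by linarith [hρ1 n]
  set δ := min (min δ₁ δ₂) (1 - ρ n) with hδdef
  have hδ : 0 < δ := lt_min (lt_min hδ₁ hδ₂) hδ₃
  have hbase : ∀ i : Fin (n + 1), ((r / 2 : ℝ) : ℂ) * α i ∈ ray i := fun i =>
    ⟨r / 2, ⟨le_rfl, by linarith [hρR n]⟩, rfl⟩
  have hmeet : ∀ i j : Fin (n + 1), ((ρ j : ℝ) : ℂ) * α i ∈ ray i := fun i j =>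
    ⟨ρ j, ⟨by linarith [hρR j], hρmono _ _ (Nat.lt_succ_iff.1 j.2)⟩, rfl⟩
  have hmeet' : ∀ i j : Fin (n + 1), ((ρ j : ℝ) : ℂ) * α i ∈ circ j := fun i j => by
    rw [mem_sphere_zero_iff_norm, norm_mul, hα, mul_one, norm_real,
      Real.norm_of_nonneg (by linarith [hρR j])]
  choose B₁ hB₁ using fun i => schottky_of_isPreconnected (hrayc i) (hraycn i) hδ (hbase i) A
  choose B₂ hB₂ using fun i j => schottky_of_isPreconnected (hcircc j) (hcirccn j) hδ (hmeet' i j)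
    (B₁ i)
  refine ⟨∑ i, ∑ j, |B₂ i j|, fun f hf P hP hom hA => ?_⟩
  have hgood : ∀ K : Set ℂ, K ⊆ closedBall 0 (ρ n) → (∀ x ∈ K, ∀ p ∈ P, δ ≤ dist x p) →
      ∀ x ∈ K, DifferentiableOn ℂ f (ball x δ) ∧ ∀ z ∈ ball x δ, f z ≠ 0 ∧ f z ≠ 1 := by
    intro K hK hKP x hx
    have hsub : ball x δ ⊆ ball 0 1 := by
      apply ball_subset_ball'
      have := mem_closedBall.1 (hK hx)
      have := min_le_right (min δ₁ δ₂) (1 - ρ n)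
      linarith
    refine ⟨hf.mono hsub, fun z hz => hom z (hsub hz) fun hzP => ?_⟩
    have := hKP x hx z hzP
    rw [mem_ball, dist_comm] at hz
    linarith
  have hcard : P.card < Fintype.card (Fin (n + 1)) := by simp; omega
  obtain ⟨i, hi⟩ := h1 P hcard
  obtain ⟨j, hj⟩ := h2 P hcard
  have hray := hB₁ i f (hgood (ray i) (by
      rintro _ ⟨t, ht, rfl⟩
      rw [mem_closedBall_zero_iff, hnormray t ht]
      exact ht.2)
    fun x hx p hp => ((min_le_left _ _).trans (min_le_left _ _)).trans (hi x hx p hp))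
    (hA _ (by
      rw [mem_ball_zero_iff, hnormray _ ⟨le_rfl, by linarith [hρR n]⟩]
      linarith)) _ (hmeet i j)
  have hcirc := hB₂ i j f (hgood (circ j) (by
      intro z hz
      rw [mem_closedBall, mem_sphere.1 hz]
      exact hρmono _ _ (Nat.lt_succ_iff.1 j.2))
    fun x hx p hp => ((min_le_left _ _).trans (min_le_right _ _)).trans (hj x hx p hp)) hray
  intro z hz
  have hsubj : closedBall (0 : ℂ) (ρ j) ⊆ ball 0 1 := closedBall_subset_ball (hρ1 j)
  have hρj : ρ j ≠ 0 := by linarith [hρR j]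
  have := norm_le_of_forall_mem_frontier_norm_le (U := ball (0 : ℂ) (ρ j)) isBounded_ball
    ((hf.mono hsubj).diffContOnCl_ball Subset.rfl) (by rw [frontier_ball _ hρj]; exact hcirc)
    (subset_closure (ball_subset_ball (hρR j).le hz))
  refine this.trans ((le_abs_self _).trans ?_)
  refine (Finset.single_le_sum (f := fun j => |B₂ i j|) (fun _ _ => abs_nonneg _)
    (Finset.mem_univ j)).trans ?_
  exact Finset.single_le_sum (f := fun i => ∑ j, |B₂ i j|)
    (fun _ _ => Finset.sum_nonneg fun _ _ => abs_nonneg _) (Finset.mem_univ i)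

/-- The function `z ↦ z - w` has a continuous logarithm on `Γ`. -/
def HasLogOn (Γ : Set ℂ) (w : ℂ) : Prop :=
  ∃ L : ℂ → ℂ, ContinuousOn L Γ ∧ ∀ z ∈ Γ, exp (L z) = z - w

theorem HasLogOn.of_forall_lt {Γ : Set ℂ} {w w' : ℂ} (h : HasLogOn Γ w)
    (hw : ∀ z ∈ Γ, ‖w - w'‖ < ‖z - w‖) : HasLogOn Γ w' := by
  obtain ⟨L, hL, hLe⟩ := h
  have h0 : ∀ z ∈ Γ, z - w ≠ 0 := fun z hz =>
    norm_pos_iff.1 ((norm_nonneg _).trans_lt (hw z hz))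
  have hs : ∀ z ∈ Γ, 1 + (w - w') / (z - w) ∈ slitPlane := fun z hz =>
    mem_slitPlane_of_norm_lt_one (by
      rw [norm_div, div_lt_one (norm_pos_iff.2 (h0 z hz))]; exact hw z hz)
  refine ⟨fun z => L z + log (1 + (w - w') / (z - w)), hL.add (ContinuousOn.clog ?_ hs),
    fun z hz => ?_⟩
  · exact continuousOn_const.add (continuousOn_const.div (by fun_prop) h0)
  · have := h0 z hz
    rw [exp_add, hLe z hz, exp_log (slitPlane_ne_zero (hs z hz))]
    field_simp
    ring

theorem HasLogOn.of_subset_ball {Γ : Set ℂ} {w : ℂ} {ρ : ℝ} (hρ : 0 < ρ) (hΓ : Γ ⊆ ball 0 ρ)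
    (hw : ρ ≤ ‖w‖) : HasLogOn Γ w := by
  have hw0 : w ≠ 0 := norm_pos_iff.1 (hρ.trans_le hw)
  have hs : ∀ z ∈ Γ, 1 + -(z / w) ∈ slitPlane := fun z hz =>
    mem_slitPlane_of_norm_lt_one (by
      rw [norm_neg, norm_div, div_lt_one (norm_pos_iff.2 hw0)]
      exact (mem_ball_zero_iff.1 (hΓ hz)).trans_le hw)
  refine ⟨fun z => log (-w) + log (1 + -(z / w)), continuousOn_const.add (ContinuousOn.clog
    (by fun_prop) hs), fun z hz => ?_⟩
  rw [exp_add, exp_log (neg_ne_zero.2 hw0), exp_log (slitPlane_ne_zero (hs z hz))]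
  field_simp
  ring

theorem hasLogOn_of_le_im {f : ℂ → ℂ} (hf : ContinuousOn f (ball 0 1))
    (hopen : ∀ U ⊆ ball (0 : ℂ) 1, IsOpen U → IsOpen (f '' U)) {Γ : Set ℂ} (hΓ : IsCompact Γ)
    {ρ : ℝ} (hρ0 : 0 < ρ) (hρ : ρ < 1) (hΓρ : Γ ⊆ ball 0 ρ) {c : ℝ}
    (hc : ∀ z ∈ Γ, (f z).re = 0 → (f z).im = c) {w : ℂ} (hwΓ : w ∉ Γ) (hw0 : (f w).re = 0)
    (hwc : c ≤ (f w).im) : HasLogOn Γ w := by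
  by_contra hnot
  set T : Set ℂ := {w | w ∉ Γ ∧ ¬ HasLogOn Γ w} with hT
  have hdist : ∀ w ∉ Γ, ∃ d > 0, ∀ z ∈ Γ, d ≤ ‖z - w‖ := fun w hw => by
    obtain ⟨d, hd, h⟩ := Metric.isOpen_iff.1 hΓ.isClosed.isOpen_compl w hw
    refine ⟨d, hd, fun z hz => ?_⟩
    by_contra! hlt
    exact h (by rwa [mem_ball, dist_eq_norm]) hz
  have hnear : ∀ w ∉ Γ, ∀ᶠ w' in 𝓝 w, w' ∉ Γ ∧ (HasLogOn Γ w ↔ HasLogOn Γ w') := fun w hw => by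
    obtain ⟨d, hd, h⟩ := hdist w hw
    filter_upwards [ball_mem_nhds w (half_pos hd)] with w' hw'
    rw [mem_ball, dist_eq_norm] at hw'
    have h1 : ∀ z ∈ Γ, d / 2 < ‖z - w'‖ := fun z hz => by
      have h2 := norm_sub_le (z - w') (w - w')
      rw [sub_sub_sub_cancel_right, norm_sub_rev w w'] at h2
      linarith [h z hz]
    refine ⟨fun hw'Γ => ?_, fun hl => hl.of_forall_lt fun z hz => ?_,
      fun hl => hl.of_forall_lt fun z hz => hw'.trans (h1 z hz)⟩
    · have := h1 w' hw'Γ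
      rw [sub_self, norm_zero] at this
      linarith
    · rw [norm_sub_rev]; linarith [h z hz]
  have hTopen : IsOpen T := isOpen_iff_mem_nhds.2 fun w hw => by
    filter_upwards [hnear w hw.1] with w' hw'
    exact ⟨hw'.1, fun h => hw.2 (hw'.2.2 h)⟩
  have hTρ : T ⊆ closedBall 0 ρ := fun w hw => by
    rw [mem_closedBall_zero_iff]
    by_contra! h
    exact hw.2 (.of_subset_ball hρ0 hΓρ h.le)
  have hclρ : closure T ⊆ closedBall 0 ρ := closure_minimal hTρ isClosed_closedBall
  have hcl1 : closure T ⊆ ball 0 1 := hclρ.trans (closedBall_subset_ball hρ)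
  have hclT : ∀ w ∈ closure T, w ∉ Γ → w ∈ T := fun w hw hwΓ => by
    refine ⟨hwΓ, fun hl => ?_⟩
    obtain ⟨w', hw', hw'T⟩ := mem_closure_iff_nhds.1 hw _ (hnear w hwΓ)
    exact hw'T.2 (hw'.2.1 hl)
  have hcompT : IsCompact (closure T) := (isCompact_closedBall 0 ρ).of_isClosed_subset
    isClosed_closure hclρ
  have hY : IsCompact (closure T ∩ f ⁻¹' {z | z.re = 0}) :=
    hcompT.of_isClosed_subset ((hf.mono hcl1).preimage_isClosed_of_isClosed isClosed_closure
      (isClosed_eq continuous_re continuous_const)) inter_subset_left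
  have hup : ∀ y ∈ T, (f y).re = 0 → ∃ y' ∈ T, (f y').re = 0 ∧ (f y).im < (f y').im := by
    intro y hy hy0
    have h1 : f '' T ∈ 𝓝 (f y) :=
      (hopen T (subset_closure.trans hcl1) hTopen).mem_nhds (mem_image_of_mem f hy)
    have h2 : Tendsto (fun ε : ℝ => f y + ε * I) (𝓝[>] 0) (𝓝 (f y)) := by
      have : Continuous fun ε : ℝ => f y + ε * I := by fun_prop
      simpa using (this.tendsto 0).mono_left nhdsWithin_le_nhds
    obtain ⟨ε, ⟨y', hy', he⟩, hε⟩ := ((h2.eventually h1).and self_mem_nhdsWithin).exists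
    have hε0 : (0 : ℝ) < ε := hε
    refine ⟨y', hy', ?_, ?_⟩ <;> rw [he] <;> simp [hy0, hε0]
  have hwT : w ∈ T := ⟨hwΓ, hnot⟩
  obtain ⟨y, hy, hmax⟩ := hY.exists_isMaxOn ⟨w, subset_closure hwT, hw0⟩
    (f := fun z => (f z).im)
    (continuous_im.comp_continuousOn (hf.mono (inter_subset_left.trans hcl1)))
  have hmax' : ∀ z ∈ T, (f z).re = 0 → (f z).im ≤ (f y).im := fun z hz hz0 =>
    hmax ⟨subset_closure hz, hz0⟩
  obtain ⟨w', hw'T, hw'0, hw'⟩ := hup w hwT hw0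
  have h1 := hmax' w' hw'T hw'0
  have hyT : y ∈ T := hclT y hy.1 fun hyΓ => by
    have := hc y hyΓ hy.2
    linarith
  obtain ⟨y', hy'T, hy'0, hlt⟩ := hup y hyT hy.2
  exact absurd (hmax' y' hy'T hy'0) (not_le.2 hlt)

/-- If the compact set `Γ` meets the zero set of `re f` only on a level set of `im f`, then it does
not wind around any other zero of `re f`. -/
theorem hasLogOn_of_re_eq_zero {f : ℂ → ℂ} (hf : ContinuousOn f (ball 0 1))
    (hopen : ∀ U ⊆ ball (0 : ℂ) 1, IsOpen U → IsOpen (f '' U)) {Γ : Set ℂ} (hΓ : IsCompact Γ)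
    {ρ : ℝ} (hρ0 : 0 < ρ) (hρ : ρ < 1) (hΓρ : Γ ⊆ ball 0 ρ) {c : ℝ}
    (hc : ∀ z ∈ Γ, (f z).re = 0 → (f z).im = c) {w : ℂ} (hwΓ : w ∉ Γ) (hw0 : (f w).re = 0) :
    HasLogOn Γ w := by
  rcases le_total c (f w).im with h | h
  · exact hasLogOn_of_le_im hf hopen hΓ hρ0 hρ hΓρ hc hwΓ hw0 h
  · refine hasLogOn_of_le_im (f := fun z => -f z) (c := -c) hf.neg (fun U hU hUo => ?_) hΓ hρ0 hρ hΓρ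
      (fun z hz hz0 => ?_) hwΓ (by simpa using hw0) (by simpa using h)
    · have := (hopen U hU hUo).neg
      rwa [← Set.image_neg_eq_neg, image_image] at this
    · rw [neg_re, neg_eq_zero] at hz0
      rw [neg_im, hc z hz hz0]

theorem eq_of_exp_eq_const {α : Type*} [TopologicalSpace α] {S : Set α} (hS : IsPreconnected S)
    {F : α → ℂ} (hF : ContinuousOn F S) {w : ℂ} (h : ∀ x ∈ S, exp (F x) = w) {x y : α} (hx : x ∈ S)
    (hy : y ∈ S) : F x = F y := by
  refine hS.induction₂' (fun x y => F x = F y) (fun x hx => ?_)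
    (fun x y z _ _ _ h1 h2 => h1.trans h2) hx hy
  filter_upwards [(hF x hx).eventually (ball_mem_nhds (F x) one_pos), self_mem_nhdsWithin]
    with z hz hzS
  suffices F x = F z from ⟨this, this.symm⟩
  obtain ⟨n, hn⟩ := exp_eq_exp_iff_exists_int.1 ((h z hzS).trans (h x hx).symm)
  rw [hn, dist_eq_norm, add_sub_cancel_left, norm_mul, norm_intCast] at hz
  have h2 : ‖(2 * Real.pi * I : ℂ)‖ = 2 * Real.pi := by simp [abs_of_pos Real.pi_pos]
  rw [h2] at hz
  have h3 : |(n : ℝ)| < 1 := by nlinarith [Real.pi_gt_three, abs_nonneg (n : ℝ)]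
  have h4 : n = 0 := Int.abs_lt_one_iff.1 (by exact_mod_cast h3)
  rw [hn, h4]; simp

theorem abs_arg_one_add_le {x : ℂ} (hx : ‖x‖ ≤ 1 / 4) : |arg (1 + x)| ≤ 3 / 8 := by
  have h := norm_log_one_add_half_le_self (z := x) (by linarith)
  have h2 := (abs_im_le_norm (log (1 + x))).trans h
  rw [log_im] at h2
  linarith

theorem pi_sub_le_arg_sub_arg {α : ℂ} {η : ℝ} (hη : 0 < η) (hα : ‖α‖ ≤ η / 4) (hi : 0 < α.im) :
    Real.pi - 3 / 4 ≤ arg (η - α) - arg (-η - α) := by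
  have hηc : (η : ℂ) ≠ 0 := ofReal_ne_zero.2 hη.ne'
  have hn : ‖α / η‖ ≤ 1 / 4 := by
    rw [norm_div, norm_real, Real.norm_of_nonneg hη.le, div_le_iff₀ hη]; linarith
  have e1 : (η - α : ℂ) = η * (1 + -(α / η)) := by field_simp; ring
  have e2 : (η + α : ℂ) = η * (1 + α / η) := by field_simp
  have h1 := abs_arg_one_add_le (x := -(α / η)) (by rwa [norm_neg])
  have h2 := abs_arg_one_add_le hn
  rw [← arg_real_mul _ hη, ← e1] at h1
  rw [← arg_real_mul _ hη, ← e2] at h2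
  rw [show (-η - α : ℂ) = -(η + α) by ring, arg_neg_eq_arg_sub_pi_of_im_pos (by simpa using hi)]
  linarith [(abs_le.1 h1).1, (abs_le.1 h2).2]

theorem arg_sub_arg_le_sub_pi {α : ℂ} {η : ℝ} (hη : 0 < η) (hα : ‖α‖ ≤ η / 4) (hi : α.im < 0) :
    arg (η - α) - arg (-η - α) ≤ 3 / 4 - Real.pi := by
  have hηc : (η : ℂ) ≠ 0 := ofReal_ne_zero.2 hη.ne'
  have hn : ‖α / η‖ ≤ 1 / 4 := by
    rw [norm_div, norm_real, Real.norm_of_nonneg hη.le, div_le_iff₀ hη]; linarith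
  have e1 : (η - α : ℂ) = η * (1 + -(α / η)) := by field_simp; ring
  have e2 : (η + α : ℂ) = η * (1 + α / η) := by field_simp
  have h1 := abs_arg_one_add_le (x := -(α / η)) (by rwa [norm_neg])
  have h2 := abs_arg_one_add_le hn
  rw [← arg_real_mul _ hη, ← e1] at h1
  rw [← arg_real_mul _ hη, ← e2] at h2
  rw [show (-η - α : ℂ) = -(η + α) by ring, arg_neg_eq_arg_add_pi_of_im_neg (by simpa using hi)]
  linarith [(abs_le.1 h1).2, (abs_le.1 h2).1]

theorem exists_norm_sub_le_half {f : ℂ → ℂ} (hf : DifferentiableOn ℂ f (ball 0 1)) {z₀ : ℂ}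
    (hz₀ : z₀ ∈ ball (0 : ℂ) 1) (hd : deriv f z₀ ≠ 0) : ∃ δ > 0, ∀ α : ℂ, ‖α‖ < δ →
    z₀ + α * (deriv f z₀)⁻¹ ∈ ball (0 : ℂ) 1 ∧
      ‖f (z₀ + α * (deriv f z₀)⁻¹) - f z₀ - α‖ ≤ ‖α‖ / 2 := by
  set e := (deriv f z₀)⁻¹ with he
  have h1 : HasDerivAt (fun α : ℂ => f (z₀ + α * e)) 1 0 := by
    have h2 : HasDerivAt (fun α : ℂ => z₀ + α * e) (1 * e) 0 :=
      ((hasDerivAt_id (0 : ℂ)).mul_const e).const_add z₀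
    have h3 : HasDerivAt f (deriv f z₀) (z₀ + 0 * e) := by
      rw [zero_mul, add_zero]
      exact (hf.differentiableAt (isOpen_ball.mem_nhds hz₀)).hasDerivAt
    have := h3.comp 0 h2
    rwa [one_mul, he, mul_inv_cancel₀ hd] at this
  have h2 := (hasDerivAt_iff_isLittleO.1 h1).def (show (0 : ℝ) < 1 / 2 by norm_num)
  have h3 : ∀ᶠ α : ℂ in 𝓝 0, z₀ + α * e ∈ ball (0 : ℂ) 1 := by
    have : Continuous fun α : ℂ => z₀ + α * e := by fun_prop
    refine this.continuousAt.eventually (isOpen_ball.mem_nhds ?_)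
    simpa using hz₀
  obtain ⟨δ, hδ, h⟩ := Metric.eventually_nhds_iff.1 (h2.and h3)
  refine ⟨δ, hδ, fun α hα => ?_⟩
  obtain ⟨h4, h5⟩ := h (y := α) (by rwa [dist_zero_right])
  refine ⟨h5, ?_⟩
  simp only [zero_mul, add_zero, sub_zero, smul_eq_mul, mul_one] at h4
  linarith

theorem exists_mem_ball_eq_add_mul_I {f : ℂ → ℂ}
    (hopen : ∀ U ⊆ ball (0 : ℂ) 1, IsOpen U → IsOpen (f '' U)) {z₀ : ℂ}
    {s : ℝ} (hs : 0 < s) (hsub : ball z₀ s ⊆ ball 0 1) (σ : ℝ) :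
    ∃ w ∈ ball z₀ s, ∃ ε > 0, f w = f z₀ + (ε * σ : ℝ) * I := by
  have h1 : f '' ball z₀ s ∈ 𝓝 (f z₀) :=
    (hopen _ hsub isOpen_ball).mem_nhds (mem_image_of_mem f (mem_ball_self hs))
  have h2 : Tendsto (fun ε : ℝ => f z₀ + (ε * σ : ℝ) * I) (𝓝[>] 0) (𝓝 (f z₀)) := by
    have : Continuous fun ε : ℝ => f z₀ + (ε * σ : ℝ) * I := by fun_prop
    simpa using (this.tendsto 0).mono_left nhdsWithin_le_nhds
  obtain ⟨ε, ⟨w, hw, he⟩, hε⟩ := ((h2.eventually h1).and self_mem_nhdsWithin).exists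
  exact ⟨w, hw, ε, hε, he⟩

theorem not_joinedIn_of_lt {f : ℂ → ℂ} (hf : ContinuousOn f (ball 0 1))
    (hopen : ∀ U ⊆ ball (0 : ℂ) 1, IsOpen U → IsOpen (f '' U)) {z₀ e : ℂ}
    (h0 : (f z₀).re = 0) (he : e ≠ 0) {δ : ℝ}
    (hδ : ∀ α : ℂ, ‖α‖ < δ → z₀ + α * e ∈ ball (0 : ℂ) 1 ∧ ‖f (z₀ + α * e) - f z₀ - α‖ ≤ ‖α‖ / 2)
    {η : ℝ} (hη : 0 < η) (hηδ : η < δ) :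
    ¬ JoinedIn {z | z ∈ ball (0 : ℂ) 1 ∧ z ≠ z₀ ∧ ((f z).re ≠ 0 ∨ (f z).im = (f z₀).im)}
      (z₀ + η * e) (z₀ + -η * e) := by
  rintro ⟨γ, hγ⟩
  have hen : 0 < ‖e‖ := norm_pos_iff.2 he
  have hQ : IsCompact (range γ) := isCompact_range γ.continuous
  obtain ⟨d, hd, hdQ⟩ : ∃ d > 0, ∀ t, d ≤ ‖γ t - z₀‖ := by
    have : z₀ ∈ (range γ)ᶜ := by
      rintro ⟨t, ht⟩
      exact (hγ t).2.1 ht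
    obtain ⟨d, hd, h⟩ := Metric.isOpen_iff.1 hQ.isClosed.isOpen_compl z₀ this
    refine ⟨d, hd, fun t => ?_⟩
    by_contra! hlt
    exact h (by rwa [mem_ball, dist_eq_norm]) (mem_range_self t)
  let sg : ℝ → ℂ := fun t => z₀ + t * e
  have hsgc : Continuous sg := by fun_prop
  have hmemδ : ∀ t ∈ Icc (-η) η, ‖(t : ℂ)‖ < δ := fun t ht => by
    rw [norm_real, Real.norm_eq_abs]; exact (abs_le.2 ht).trans_lt hηδ
  set Γ : Set ℂ := range γ ∪ sg '' Icc (-η) η with hΓdef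
  have hΓ : IsCompact Γ := hQ.union (isCompact_Icc.image hsgc)
  have hΓ1 : Γ ⊆ ball 0 1 := by
    rintro z (⟨t, rfl⟩ | ⟨t, ht, rfl⟩)
    · exact (hγ t).1
    · exact (hδ t (hmemδ t ht)).1
  have hΓc : ∀ z ∈ Γ, (f z).re = 0 → (f z).im = (f z₀).im := by
    rintro z (⟨t, rfl⟩ | ⟨t, ht, rfl⟩) hz
    · exact (hγ t).2.2.resolve_left fun h => h hz
    · have h1 := (abs_re_le_norm _).trans (hδ t (hmemδ t ht)).2
      simp only [sg] at hz ⊢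
      rw [sub_re, sub_re, hz, h0, norm_real, Real.norm_eq_abs, ofReal_re, sub_self, zero_sub,
        abs_neg] at h1
      have h2 : t = 0 := by
        rw [← abs_eq_zero]; linarith [abs_nonneg t]
      simp [h2]
  obtain ⟨ρ, hρ0, hρ1, hΓρ⟩ : ∃ ρ : ℝ, 0 < ρ ∧ ρ < 1 ∧ Γ ⊆ ball 0 ρ := by
    obtain ⟨z, hz, hmax⟩ := hΓ.exists_isMaxOn (f := fun z : ℂ => ‖z‖)
      ⟨γ 0, Or.inl (mem_range_self _)⟩ continuous_norm.continuousOn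
    have h1 := mem_ball_zero_iff.1 (hΓ1 hz)
    have h2 := norm_nonneg z
    refine ⟨(‖z‖ + 1) / 2, by linarith, by linarith, fun w hw => ?_⟩
    have : ‖w‖ ≤ ‖z‖ := hmax hw
    rw [mem_ball_zero_iff]; linarith
  set s := min (η / 4) (d / (10 * ‖e‖)) with hs
  have hs0 : 0 < s := lt_min (by positivity) (by positivity)
  have hsη : s ≤ η / 4 := min_le_left _ _
  have hsd : s * ‖e‖ ≤ d / 10 := by
    have := min_le_right (η / 4) (d / (10 * ‖e‖))
    calc s * ‖e‖ ≤ d / (10 * ‖e‖) * ‖e‖ := by gcongr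
      _ = d / 10 := by field_simp
  have hrep : ∀ w ∈ ball z₀ (s * ‖e‖), ∃ α : ℂ, ‖α‖ < s ∧ w = z₀ + α * e := fun w hw => by
    refine ⟨(w - z₀) / e, ?_, by field_simp; ring⟩
    rw [norm_div, div_lt_iff₀ hen, ← dist_eq_norm]
    exact hw
  have hsub : ball z₀ (s * ‖e‖) ⊆ ball 0 1 := fun w hw => by
    obtain ⟨α, hα, rfl⟩ := hrep w hw
    exact (hδ α (by linarith)).1
  have main : ∀ σ : ℝ, σ ≠ 0 → ∃ α : ℂ, ‖α‖ < s ∧ 0 < α.im * σ ∧ ∃ L : ℂ → ℂ, ContinuousOn L Γ ∧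
      (∀ z ∈ Γ, exp (L z) = z - (z₀ + α * e)) ∧
      (L (z₀ + η * e)).im - (L (z₀ + -η * e)).im = arg (η - α) - arg (-η - α) := by
    intro σ hσ
    obtain ⟨w, hw, ε, hε, hfw⟩ :=
      exists_mem_ball_eq_add_mul_I hopen (mul_pos hs0 hen) hsub σ
    obtain ⟨α, hα, rfl⟩ := hrep w hw
    have hre : (f (z₀ + α * e)).re = 0 := by rw [hfw]; simp [h0]
    have him : (f (z₀ + α * e)).im = (f z₀).im + ε * σ := by rw [hfw]; simp
    have hασ : 0 < α.im * σ := by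
      have h1 := (hδ α (by linarith)).2
      rw [hfw, add_sub_cancel_left] at h1
      have h2 : ‖((ε * σ : ℝ) : ℂ) * I - α‖ ^ 2 ≤ ‖α‖ ^ 2 := by
        gcongr
        linarith [norm_nonneg α]
      rw [← normSq_eq_norm_sq, ← normSq_eq_norm_sq, normSq_apply, normSq_apply] at h2
      simp only [sub_re, re_ofReal_mul, I_re, mul_zero, zero_sub, sub_im, im_ofReal_mul, I_im,
        mul_one] at h2
      have h3 : 0 < ε * σ ^ 2 := by positivity
      nlinarith
    have hwΓ : z₀ + α * e ∉ Γ := fun h => by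
      have := hΓc _ h hre
      rw [him] at this
      have h3 : ε * σ ≠ 0 := mul_ne_zero hε.ne' hσ
      exact h3 (by linarith)
    obtain ⟨L, hL, hLe⟩ := hasLogOn_of_re_eq_zero hf hopen hΓ hρ0 hρ1 hΓρ hΓc hwΓ hre
    refine ⟨α, hα, hασ, L, hL, hLe, ?_⟩
    have hslit : ∀ t : ℝ, (t : ℂ) - α ∈ slitPlane := fun t => Or.inr (by
      rw [sub_im, ofReal_im, zero_sub]
      exact neg_ne_zero.2 (left_ne_zero_of_mul hασ.ne'))
    have hF := eq_of_exp_eq_const (S := Icc (-η) η) (F := fun t => L (sg t) - log (t - α)) (w := e)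
      isPreconnected_Icc
      ((hL.comp hsgc.continuousOn fun t ht => Or.inr (mem_image_of_mem _ ht)).sub
        (ContinuousOn.clog (by fun_prop) fun t _ => hslit t))
      (fun t ht => by
        have h1 := slitPlane_ne_zero (hslit t)
        rw [exp_sub, exp_log h1, hLe _ (Or.inr (mem_image_of_mem _ ht))]
        simp only [sg]
        field_simp
        ring)
      (right_mem_Icc.2 (by linarith)) (left_mem_Icc.2 (by linarith))
    have := congrArg im hF
    simp only [sg, sub_im, log_im, ofReal_neg] at this
    linarith
  obtain ⟨α₁, hα₁, hi₁, L₁, hL₁, hLe₁, hd₁⟩ := main 1 one_ne_zero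
  obtain ⟨α₂, hα₂, hi₂, L₂, hL₂, hLe₂, hd₂⟩ := main (-1) (by norm_num)
  have hb₁ := pi_sub_le_arg_sub_arg hη (hα₁.le.trans hsη) (by simpa using hi₁)
  have hb₂ := arg_sub_arg_le_sub_pi hη (hα₂.le.trans hsη) (by linarith)
  set w₂ := z₀ + α₂ * e with hw₂
  have hγΓ : ∀ t, γ t ∈ Γ := fun t => Or.inl (mem_range_self t)
  have hne : ∀ t, γ t - w₂ ≠ 0 := fun t => by rw [← hLe₂ _ (hγΓ t)]; exact exp_ne_zero _
  let x : unitInterval → ℂ := fun t => (α₂ - α₁) * e / (γ t - w₂)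
  have hx : ∀ t, ‖x t‖ ≤ 1 / 4 := fun t => by
    have h1 : ‖α₂ - α₁‖ * ‖e‖ ≤ 2 * (d / 10) := by
      have := norm_sub_le α₂ α₁
      have : ‖α₂ - α₁‖ * ‖e‖ ≤ (2 * s) * ‖e‖ := by gcongr; linarith
      linarith
    have h2 : 9 * d / 10 ≤ ‖γ t - w₂‖ := by
      have h3 := norm_sub_norm_le (γ t - z₀) (α₂ * e)
      have h4 : ‖α₂ * e‖ ≤ d / 10 := by
        rw [norm_mul]
        exact (mul_le_mul_of_nonneg_right hα₂.le hen.le).trans hsd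
      have h5 : γ t - w₂ = γ t - z₀ - α₂ * e := by rw [hw₂]; ring
      rw [h5]
      linarith [hdQ t]
    simp only [x]
    rw [norm_div, norm_mul, div_le_iff₀ (norm_pos_iff.2 (hne t))]
    linarith
  have hslit : ∀ t, 1 + x t ∈ slitPlane := fun t =>
    mem_slitPlane_of_norm_lt_one ((hx t).trans_lt (by norm_num))
  have hF := eq_of_exp_eq_const (S := univ)
    (F := fun t => L₁ (γ t) - L₂ (γ t) - log (1 + x t)) (w := 1) isPreconnected_univ
    (((hL₁.comp γ.continuous.continuousOn fun t _ => hγΓ t).sub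
      (hL₂.comp γ.continuous.continuousOn fun t _ => hγΓ t)).sub
      (ContinuousOn.clog (continuousOn_const.add (continuousOn_const.div
        (by fun_prop) fun t _ => hne t)) fun t _ => hslit t))
    (fun t _ => by
      have h1 := hne t
      have h2 := slitPlane_ne_zero (hslit t)
      rw [exp_sub, exp_sub, exp_log h2, hLe₁ _ (hγΓ t), hLe₂ _ (hγΓ t), div_div, div_eq_one_iff_eq
        (mul_ne_zero h1 h2)]
      simp only [x]
      rw [mul_add, mul_one, mul_div_cancel₀ _ h1, hw₂]
      ring)
    (mem_univ 0) (mem_univ 1)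
  have h1 := congrArg im hF
  simp only [sub_im, log_im, γ.source, γ.target] at h1
  have h2 := abs_le.1 (abs_arg_one_add_le (hx 0))
  have h3 := abs_le.1 (abs_arg_one_add_le (hx 1))
  have := Real.pi_gt_three
  linarith [h2.1, h2.2, h3.1, h3.2]

/-- `κ` labels the points of the disc off the zero set of `re f`, in such a way that points with the
same label lie in the same nodal domain. -/
def IsNodalLabelling {N : ℕ} (f : ℂ → ℂ) (κ : ℂ → Fin N) : Prop :=
  ∀ x ∈ ball (0 : ℂ) 1, ∀ y ∈ ball (0 : ℂ) 1, (f x).re ≠ 0 → (f y).re ≠ 0 → κ x = κ y →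
    JoinedIn {z | z ∈ ball (0 : ℂ) 1 ∧ (f z).re ≠ 0} x y

theorem card_le_of_isNodalLabelling {N : ℕ} {f : ℂ → ℂ} {κ : ℂ → Fin N}
    (hf : DifferentiableOn ℂ f (ball 0 1))
    (hopen : ∀ U ⊆ ball (0 : ℂ) 1, IsOpen U → IsOpen (f '' U)) (hκ : IsNodalLabelling f κ) {c : ℝ}
    {Z : Finset ℂ} (hZ : ∀ z ∈ Z, z ∈ ball (0 : ℂ) 1 ∧ f z = c * I ∧ deriv f z ≠ 0) :
    Z.card ≤ N := by
  classical
  let e : ℂ → ℂ := fun z => (deriv f z)⁻¹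
  let X : ℂ → Set ℂ := fun z₀ =>
    {z | z ∈ ball (0 : ℂ) 1 ∧ z ≠ z₀ ∧ ((f z).re ≠ 0 ∨ (f z).im = (f z₀).im)}
  have hre : ∀ z ∈ Z, (f z).re = 0 := fun z hz => by rw [(hZ z hz).2.1]; simp
  have him : ∀ z ∈ Z, (f z).im = c := fun z hz => by rw [(hZ z hz).2.1]; simp
  have hev : ∀ᶠ η : ℝ in 𝓝[>] 0, ∀ z : Z,
      (∀ t : ℝ, |t| ≤ η → z.1 + t * e z ∈ ball (0 : ℂ) 1 ∧
        (t ≠ 0 → (f (z + t * e z)).re ≠ 0) ∧ ∀ z' : Z, z' ≠ z → z.1 + t * e z ≠ z') ∧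
      ¬ JoinedIn (X z) (z + η * e z) (z + -η * e z) := by
    refine eventually_all.2 fun z => ?_
    obtain ⟨hz1, hz2, hz3⟩ := hZ z z.2
    obtain ⟨δ, hδ, h⟩ := exists_norm_sub_le_half hf hz1 hz3
    have hsep : ∀ᶠ w : ℂ in 𝓝 z.1, ∀ z' : Z, z' ≠ z → w ≠ z' :=
      eventually_all.2 fun z' => eventually_imp_distrib_left.2 fun hne =>
        isOpen_ne.mem_nhds (fun heq => hne (Subtype.ext heq.symm))
    have hsep' : ∀ᶠ t : ℝ in 𝓝 0, ∀ z' : Z, z' ≠ z → z.1 + t * e z ≠ z' := by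
      have hc : Continuous fun t : ℝ => z.1 + t * e z := by fun_prop
      have h0 : z.1 + ((0 : ℝ) : ℂ) * e z = z := by rw [ofReal_zero, zero_mul, add_zero]
      exact (hc.tendsto 0).eventually (h0.symm ▸ hsep)
    obtain ⟨ε, hε, hεs⟩ := Metric.eventually_nhds_iff.1 hsep'
    filter_upwards [Ioo_mem_nhdsGT (lt_min hδ hε)] with η hη
    have hηδ := hη.2.trans_le (min_le_left _ _)
    have hηε := hη.2.trans_le (min_le_right _ _)
    refine ⟨fun t ht => ?_, not_joinedIn_of_lt hf.continuousOn hopen (hre z z.2)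
      (inv_ne_zero hz3) h hη.1 hηδ⟩
    obtain ⟨h1, h2⟩ := h t (by rw [norm_real, Real.norm_eq_abs]; linarith)
    refine ⟨h1, fun ht0 h0 => ht0 ?_, hεs (by rw [dist_zero_right, Real.norm_eq_abs]; linarith)⟩
    have h3 := (abs_re_le_norm _).trans h2
    rw [sub_re, sub_re, hre z z.2, norm_real, Real.norm_eq_abs, ofReal_re] at h3
    simp only [e] at h0
    rw [h0, sub_self, zero_sub, abs_neg] at h3
    rw [← abs_eq_zero]; linarith [abs_nonneg t]
  obtain ⟨η, hη, hη0⟩ := (hev.and self_mem_nhdsWithin).exists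
  have hη0 : (0 : ℝ) < η := hη0
  let p : Z → ℂ := fun z => z + η * e z
  let q : Z → ℂ := fun z => z + -η * e z
  have hp : ∀ z, p z ∈ ball (0 : ℂ) 1 ∧ (f (p z)).re ≠ 0 := fun z => by
    have := (hη z).1 η (abs_of_pos hη0).le
    exact ⟨this.1, this.2.1 hη0.ne'⟩
  have hq : ∀ z, q z ∈ ball (0 : ℂ) 1 ∧ (f (q z)).re ≠ 0 := fun z => by
    have := (hη z).1 (-η) (by rw [abs_neg, abs_of_pos hη0])
    rw [ofReal_neg] at this
    exact ⟨this.1, this.2.1 (neg_ne_zero.2 hη0.ne')⟩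
  have hsubX : ∀ z ∈ Z, {w | w ∈ ball (0 : ℂ) 1 ∧ (f w).re ≠ 0} ⊆ X z := fun z hz w hw =>
    ⟨hw.1, fun h => hw.2 (h ▸ hre z hz), Or.inl hw.2⟩
  let ψ : Z → Fin N → ℝ := fun z i =>
    if ∃ x, κ x = i ∧ x ∈ ball (0 : ℂ) 1 ∧ (f x).re ≠ 0 ∧ JoinedIn (X z) (p z) x then 1 else 0
  have hψ : ∀ z y, y ∈ ball (0 : ℂ) 1 → (f y).re ≠ 0 →
      ψ z (κ y) = if JoinedIn (X z) (p z) y then 1 else 0 := by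
    intro z y hy hy0
    simp only [ψ]
    congr 1
    refine propext ⟨?_, fun h => ⟨y, rfl, hy, hy0, h⟩⟩
    rintro ⟨x, hxy, hx, hx0, h⟩
    exact h.trans ((hκ x hx y hy hx0 hy0 hxy).mono (hsubX z z.2))
  have hself : ∀ z : Z, ψ z (κ (p z)) - ψ z (κ (q z)) = 1 := fun z => by
    rw [hψ z _ (hp z).1 (hp z).2, hψ z _ (hq z).1 (hq z).2, if_neg (hη z).2,
      if_pos (JoinedIn.refl (hsubX z z.2 (hp z))), sub_zero]
  have hother : ∀ z w : Z, w ≠ z → ψ z (κ (p w)) - ψ z (κ (q w)) = 0 := fun z w hwz => by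
    have hj : JoinedIn (X z) (p w) (q w) := by
      refine JoinedIn.of_segment_subset ?_
      rintro _ ⟨a, b, ha, hb, hab, rfl⟩
      have e1 : a • p w + b • q w = w + ((a - b) * η : ℝ) * e w := by
        have : (a : ℂ) + b = 1 := by exact_mod_cast hab
        simp only [p, q, real_smul]
        push_cast
        linear_combination (w : ℂ) * this
      have h2 : |(a - b) * η| ≤ η := by
        rw [abs_mul, abs_of_pos hη0]
        have : |a - b| ≤ 1 := by rw [abs_le]; constructor <;> linarith
        nlinarith
      obtain ⟨h3, h4, h5⟩ := (hη w).1 _ h2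
      rw [e1]
      refine ⟨h3, h5 z hwz.symm, ?_⟩
      by_cases h0 : (a - b) * η = 0
      · right
        rw [h0, ofReal_zero, zero_mul, add_zero, him w w.2, him z z.2]
      · exact Or.inl (h4 h0)
    rw [hψ z _ (hp w).1 (hp w).2, hψ z _ (hq w).1 (hq w).2, sub_eq_zero]
    congr 1
    exact propext ⟨fun h => h.trans hj, fun h => h.trans hj.symm⟩
  have hli : LinearIndependent ℝ ψ := by
    refine Fintype.linearIndependent_iff.2 fun g hg w => ?_
    have h1 := congrFun hg (κ (p w))
    have h2 := congrFun hg (κ (q w))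
    simp only [Finset.sum_apply, Pi.smul_apply, smul_eq_mul, Pi.zero_apply] at h1 h2
    have h3 : ∑ z, g z * (ψ z (κ (p w)) - ψ z (κ (q w))) = 0 := by
      simp only [mul_sub, Finset.sum_sub_distrib, h1, h2, sub_zero]
    rw [Finset.sum_eq_single w (fun z _ hz => by rw [hother z w hz.symm, mul_zero])
      (fun h => absurd (Finset.mem_univ w) h), hself, mul_one] at h3
    exact h3
  have := hli.fintype_card_le_finrank
  rwa [Module.finrank_fin_fun, Fintype.card_coe] at this

theorem countable_critical_points {f : ℂ → ℂ} (hf : DifferentiableOn ℂ f (ball 0 1))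
    (hne : ¬ ∀ z ∈ ball (0 : ℂ) 1, deriv f z = 0) :
    {z | z ∈ ball (0 : ℂ) 1 ∧ deriv f z = 0}.Countable := by
  have hd : AnalyticOnNhd ℂ (deriv f) (ball 0 1) := (hf.analyticOnNhd isOpen_ball).deriv
  obtain ⟨t, -, htc, ht⟩ := TopologicalSpace.countable_cover_nhdsWithin
    (s := {z | z ∈ ball (0 : ℂ) 1 ∧ deriv f z = 0}) (f := fun z => {z}) (fun z hz => by
      have : ∀ᶠ y in 𝓝[≠] z, deriv f y ≠ 0 := by
        by_contra h
        exact hne (hd.eqOn_zero_of_preconnected_of_frequently_eq_zero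
          (convex_ball _ _).isPreconnected hz.1 h)
      rw [eventually_nhdsWithin_iff] at this
      filter_upwards [nhdsWithin_le_nhds this, self_mem_nhdsWithin] with y hy hys
      by_contra hyz
      exact hy hyz hys.2)
  exact htc.mono (by simpa using ht)

/-- A holomorphic function on the disc whose real part has at most `N` nodal domains is bounded on
a large disc in terms of its bound on a small disc. -/
theorem exists_bound_of_isNodalLabelling (N : ℕ) {r R : ℝ} (hr : 0 < r) (hrR : r ≤ R) (hR : R < 1)
    (A : ℝ) : ∃ B : ℝ, ∀ f : ℂ → ℂ, DifferentiableOn ℂ f (ball 0 1) →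
    ∀ κ : ℂ → Fin N, IsNodalLabelling f κ → (∀ z ∈ ball (0 : ℂ) r, ‖f z‖ ≤ A) →
    ∀ z ∈ ball (0 : ℂ) R, ‖f z‖ ≤ B := by
  obtain ⟨B, hB⟩ := exists_bound_of_omits_off_finset (2 * N) hr hrR hR (A + 1)
  refine ⟨max A (3 * B + 1), fun f hf κ hκ hA z hz => ?_⟩
  rcases (hf.analyticOnNhd isOpen_ball).is_constant_or_isOpen (convex_ball _ _).isPreconnected with
    ⟨w, hw⟩ | hopen
  · refine le_max_of_le_left ?_
    rw [hw z (ball_subset_ball hR.le hz), ← hw 0 (mem_ball_self one_pos)]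
    exact hA 0 (mem_ball_self hr)
  refine le_max_of_le_right ?_
  have hne : ¬ ∀ z ∈ ball (0 : ℂ) 1, deriv f z = 0 := fun h => by
    have h1 : f '' ball (0 : ℂ) 1 = {f 0} := by
      refine Subset.antisymm ?_ (by
        rw [singleton_subset_iff]; exact mem_image_of_mem f (mem_ball_self one_pos))
      rintro _ ⟨y, hy, rfl⟩
      exact isOpen_ball.is_const_of_deriv_eq_zero (convex_ball _ _).isPreconnected hf h hy
        (mem_ball_self one_pos)
    have h2 := hopen _ Subset.rfl isOpen_ball
    rw [h1] at h2
    exact not_isOpen_singleton _ h2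
  have hdense := ((countable_critical_points hf hne).image fun z => (f z).im).dense_compl ℝ
  have hfin : ∀ c : ℝ, c ∈ ((fun z => (f z).im) '' {z | z ∈ ball (0 : ℂ) 1 ∧ deriv f z = 0})ᶜ →
      ∃ P : Finset ℂ, P.card ≤ N ∧ ∀ z ∈ ball (0 : ℂ) 1, f z = c * I → z ∈ P := by
    intro c hc
    have hcard : ∀ Z : Finset ℂ, (Z : Set ℂ) ⊆ {z | z ∈ ball (0 : ℂ) 1 ∧ f z = c * I} →
        Z.card ≤ N := fun Z hZ => card_le_of_isNodalLabelling hf hopen hκ (c := c) fun z hz => by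
      obtain ⟨h1, h2⟩ := hZ hz
      exact ⟨h1, h2, fun h => hc ⟨z, ⟨h1, h⟩, by simp [h2]⟩⟩
    have hfin : {z | z ∈ ball (0 : ℂ) 1 ∧ f z = c * I}.Finite := by
      by_contra hinf
      obtain ⟨Z, hZ, hZc⟩ := Set.Infinite.exists_subset_card_eq hinf (N + 1)
      have := hcard Z hZ
      omega
    exact ⟨hfin.toFinset, hcard _ (by simp), fun z hz hzc => hfin.mem_toFinset.2 ⟨hz, hzc⟩⟩
  obtain ⟨c₁, hc₁, h01, h11⟩ := hdense.exists_between (show (0 : ℝ) < 1 by norm_num)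
  obtain ⟨c₂, hc₂, h22, h23⟩ := hdense.exists_between (show (2 : ℝ) < 3 by norm_num)
  obtain ⟨P₁, hP₁, hP₁'⟩ := hfin c₁ hc₁
  obtain ⟨P₂, hP₂, hP₂'⟩ := hfin c₂ hc₂
  classical
  have hcI : ((c₂ - c₁ : ℝ) : ℂ) * I ≠ 0 :=
    mul_ne_zero (ofReal_ne_zero.2 (by linarith)) I_ne_zero
  have hn : ‖((c₂ - c₁ : ℝ) : ℂ) * I‖ = c₂ - c₁ := by
    rw [norm_mul, norm_I, mul_one, norm_real, Real.norm_of_nonneg (by linarith)]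
  have hn1 : ‖(c₁ : ℂ) * I‖ = c₁ := by
    rw [norm_mul, norm_I, mul_one, norm_real, Real.norm_of_nonneg (by linarith)]
  have key := hB (fun z => (f z - c₁ * I) / ((c₂ - c₁ : ℝ) * I)) ((hf.sub_const _).div_const _)
    (P₁ ∪ P₂) ((Finset.card_union_le _ _).trans (by omega))
    (fun z hz hzP => by
      rw [Finset.mem_union, not_or] at hzP
      refine ⟨div_ne_zero (fun h => hzP.1 (hP₁' z hz (sub_eq_zero.1 h))) hcI, fun h => ?_⟩
      rw [div_eq_one_iff_eq hcI] at h
      refine hzP.2 (hP₂' z hz ?_)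
      push_cast at h
      linear_combination h)
    (fun z hz => by
      rw [norm_div, hn]
      have h1 := norm_sub_le (f z) (c₁ * I)
      rw [hn1] at h1
      refine (div_le_self (norm_nonneg _) (by linarith)).trans ?_
      linarith [hA z hz]) z hz
  simp only [norm_div, hn] at key
  rw [div_le_iff₀ (by linarith)] at key
  have h1 := norm_sub_norm_le (f z) (c₁ * I)
  rw [hn1] at h1
  have hB0 : 0 ≤ B := by
    by_contra! h
    have := norm_nonneg (f z - c₁ * I)
    nlinarith
  nlinarith

theorem re_le_mul_re_of_forall_mem_sphere {f g : ℂ → ℂ} (hf : DifferentiableOn ℂ f (ball 0 1))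
    (hg : DifferentiableOn ℂ g (ball 0 1))
    (hZ : ∀ z ∈ ball (0 : ℂ) 1, (g z).re = 0 → (f z).re = 0) {x : ℂ} {ρ C : ℝ}
    (hx : closedBall x ρ ⊆ ball 0 1)
    (hs : ∀ z ∈ sphere x ρ, 0 ≤ (g z).re → (f z).re ≤ C * (g z).re) {z : ℂ} (hz : z ∈ ball x ρ)
    (hgz : 0 < (g z).re) : (f z).re ≤ C * (g z).re := by
  set U : Set ℂ := {w | w ∈ ball x ρ ∧ 0 < (g w).re} with hU
  have hUsub : U ⊆ ball x ρ := fun w hw => hw.1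
  have hcl : closure U ⊆ closedBall x ρ := closure_minimal (hUsub.trans ball_subset_closedBall)
    isClosed_closedBall
  have hcl0 : ∀ w ∈ closure U, 0 ≤ (g w).re := by
    have hc : IsClosed (closure U ∩ g ⁻¹' {w | 0 ≤ w.re}) :=
      (hg.continuousOn.mono (hcl.trans hx)).preimage_isClosed_of_isClosed isClosed_closure
        (isClosed_le continuous_const continuous_re)
    intro w hw
    have hsub : U ⊆ closure U ∩ g ⁻¹' {w | 0 ≤ w.re} := fun w hw => ⟨subset_closure hw, hw.2.le⟩
    exact (closure_minimal hsub hc hw).2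
  have hF : DifferentiableOn ℂ (fun w => exp (f w - C * g w)) (ball 0 1) :=
    (hf.sub (hg.const_mul _)).cexp
  have key := norm_le_of_forall_mem_frontier_norm_le (U := U) (C := 1)
    (isBounded_ball.subset hUsub) (hF.mono (hcl.trans hx)).diffContOnCl (fun w hw => by
      have hwc := hcl (frontier_subset_closure hw)
      have hw0 := hcl0 w (frontier_subset_closure hw)
      rw [norm_exp, Real.exp_le_one_iff, sub_re, re_ofReal_mul, sub_nonpos]
      rcases (mem_closedBall.1 hwc).lt_or_eq with h | h
      · have hUo : IsOpen U := (hg.continuousOn.mono (ball_subset_closedBall.trans hx)).isOpen_inter_preimage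
          isOpen_ball (isOpen_lt continuous_const continuous_re)
        have h0 : (g w).re = 0 := by
          by_contra hne
          rw [hUo.frontier_eq] at hw
          exact hw.2 ⟨h, lt_of_le_of_ne hw0 (Ne.symm hne)⟩
        rw [hZ w (hx hwc) h0, h0, mul_zero]
      · exact hs w h hw0) (subset_closure ⟨hz, hgz⟩)
  rw [norm_exp, Real.exp_le_one_iff, sub_re, re_ofReal_mul, sub_nonpos] at key
  exact key

theorem abs_re_le_mul_abs_re_of_forall_mem_sphere {f g : ℂ → ℂ}
    (hf : DifferentiableOn ℂ f (ball 0 1)) (hg : DifferentiableOn ℂ g (ball 0 1))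
    (hZ : ∀ z ∈ ball (0 : ℂ) 1, (g z).re = 0 → (f z).re = 0) {x : ℂ} {ρ C : ℝ}
    (hx : closedBall x ρ ⊆ ball 0 1)
    (hs : ∀ z ∈ sphere x ρ, |(f z).re| ≤ C * |(g z).re|) {z : ℂ} (hz : z ∈ ball x ρ) :
    |(f z).re| ≤ C * |(g z).re| := by
  have hZ' : ∀ z ∈ ball (0 : ℂ) 1, (g z).re = 0 → (-f z).re = 0 := fun z hz h => by
    rw [neg_re, hZ z hz h, neg_zero]
  rcases lt_trichotomy (g z).re 0 with h | h | h
  · have h1 := re_le_mul_re_of_forall_mem_sphere hf hg.fun_neg (C := C)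
      (fun z hz h => hZ z hz (by simpa using h)) hx (fun w hw hw0 => by
        have := hs w hw
        rw [neg_re] at hw0 ⊢
        rw [abs_of_nonpos (by linarith : (g w).re ≤ 0)] at this
        linarith [le_abs_self (f w).re]) hz (by rw [neg_re]; linarith)
    have h2 := re_le_mul_re_of_forall_mem_sphere hf.fun_neg hg.fun_neg (C := C)
      (fun z hz h => hZ' z hz (by simpa using h)) hx (fun w hw hw0 => by
        have := hs w hw
        rw [neg_re] at hw0
        rw [neg_re, neg_re]
        rw [abs_of_nonpos (by linarith : (g w).re ≤ 0)] at this
        linarith [neg_le_abs (f w).re]) hz (by rw [neg_re]; linarith)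
    rw [neg_re] at h1
    rw [neg_re, neg_re] at h2
    rw [abs_of_neg h, abs_le]
    constructor <;> linarith
  · rw [h, hZ z (hx (ball_subset_closedBall hz)) h]; simp
  · have h1 := re_le_mul_re_of_forall_mem_sphere hf hg (C := C) hZ hx (fun w hw hw0 => by
        have := hs w hw
        rw [abs_of_nonneg hw0] at this
        linarith [le_abs_self (f w).re]) hz h
    have h2 := re_le_mul_re_of_forall_mem_sphere hf.fun_neg hg (C := C) hZ' hx (fun w hw hw0 => by
        have := hs w hw
        rw [abs_of_nonneg hw0] at this
        rw [neg_re]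
        linarith [neg_le_abs (f w).re]) hz h
    rw [neg_re] at h2
    rw [abs_of_pos h, abs_le]
    constructor <;> linarith

/-- A function with bounded derivative is dominated by a function with large derivative, if both
vanish at the zero of the latter. -/
theorem abs_le_mul_abs_of_le_deriv {U V U' V' : ℝ → ℝ} {θ τ c M : ℝ} (hτ : 0 < τ) (hc : 0 < c)
    (hU : ∀ t, HasDerivAt U (U' t) t) (hV : ∀ t, HasDerivAt V (V' t) t) (hUM : ∀ t, |U' t| ≤ M)
    (hVc : ∀ t ∈ Icc (θ - τ) (θ + τ), c ≤ V' t) (h0 : |V θ| < c * τ)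
    (hZ : ∀ t, V t = 0 → U t = 0) : ∀ t ∈ Icc (θ - τ) (θ + τ), |U t| ≤ M / c * |V t| := by
  have hVcont : Continuous V := continuous_iff_continuousAt.2 fun t => (hV t).continuousAt
  have hslope := (convex_Icc (θ - τ) (θ + τ)).mul_sub_le_image_sub_of_le_deriv
    hVcont.continuousOn (fun t _ => (hV t).differentiableAt.differentiableWithinAt) (C := c)
    (fun t ht => by rw [(hV t).deriv]; exact hVc t (interior_subset ht))
  have hθ : θ ∈ Icc (θ - τ) (θ + τ) := ⟨by linarith, by linarith⟩
  have h1 := hslope _ ⟨le_rfl, by linarith⟩ _ hθ (by linarith)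
  have h2 := hslope _ hθ _ ⟨by linarith, le_rfl⟩ (by linarith)
  have h3 := abs_lt.1 h0
  obtain ⟨s, hs, hs0⟩ := intermediate_value_Icc (show θ - τ ≤ θ + τ by linarith)
    hVcont.continuousOn (show (0 : ℝ) ∈ Icc (V (θ - τ)) (V (θ + τ)) from
      ⟨by nlinarith [h3.2], by nlinarith [h3.1]⟩)
  intro t ht
  have hU1 := convex_univ.norm_image_sub_le_of_norm_hasDerivWithin_le (f := U) (C := M)
    (fun t _ => (hU t).hasDerivWithinAt) (fun t _ => hUM t) (mem_univ s) (mem_univ t)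
  rw [hZ s hs0, sub_zero, Real.norm_eq_abs, Real.norm_eq_abs] at hU1
  have hV1 : c * |t - s| ≤ |V t| := by
    rcases le_total s t with h | h
    · have := hslope s hs t ht h
      rw [hs0, sub_zero] at this
      rw [abs_of_nonneg (by linarith)]
      exact this.trans (le_abs_self _)
    · have := hslope t ht s hs h
      rw [hs0, zero_sub] at this
      rw [abs_of_nonpos (by linarith), neg_sub]
      exact this.trans (neg_le_abs _)
  have hM : 0 ≤ M := (abs_nonneg _).trans (hUM t)
  calc |U t| ≤ M * |t - s| := hU1
    _ = M / c * (c * |t - s|) := by field_simp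
    _ ≤ M / c * |V t| := by gcongr

/-- On small circles around `x`, the real part of `g` vanishes only to first order. -/
theorem eventually_im_sub_mul_deriv_ne_zero {g : ℂ → ℂ} (hg : DifferentiableOn ℂ g (ball 0 1))
    {x : ℂ} (hx : x ∈ ball (0 : ℂ) 1) (hgx : (g x).re = 0)
    (hne : ∃ z ∈ ball (0 : ℂ) 1, (g z).re ≠ 0) :
    ∀ᶠ z in 𝓝[≠] x, (g z).re = 0 → ((z - x) * deriv g z).im ≠ 0 := by
  have hga : AnalyticOnNhd ℂ g (ball 0 1) := hg.analyticOnNhd isOpen_ball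
  have hGa : AnalyticAt ℂ (fun z => g z - g x) x := (hga x hx).sub analyticAt_const
  have hG0 : ¬ ∀ᶠ z in 𝓝 x, g z - g x = 0 := fun h => by
    obtain ⟨z, hz, hz0⟩ := hne
    have := (hga.eqOn_of_preconnected_of_eventuallyEq (g := fun _ => g x) analyticOnNhd_const
      (convex_ball _ _).isPreconnected hx (h.mono fun z hz => sub_eq_zero.1 hz)) hz
    exact hz0 (by rw [this, hgx])
  obtain ⟨m, h, hh, hh0, heq⟩ := hGa.exists_eventuallyEq_pow_smul_nonzero_iff.2 hG0
  have hm : m ≠ 0 := by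
    rintro rfl
    have := heq.self_of_nhds
    simp only [sub_self, pow_zero, one_smul] at this
    exact hh0 this.symm
  have hm1 : (1 : ℝ) ≤ m := by exact_mod_cast Nat.one_le_iff_ne_zero.2 hm
  have hlim : Tendsto (fun z => (z - x) * deriv h z / h z) (𝓝 x) (𝓝 0) := by
    have : ContinuousAt (fun z => (z - x) * deriv h z / h z) x :=
      ((continuousAt_id.sub continuousAt_const).mul hh.deriv.continuousAt).div hh.continuousAt hh0
    simpa [ContinuousAt] using this
  have hsmall : ∀ᶠ z in 𝓝 x, ‖(z - x) * deriv h z / h z‖ < 1 := by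
    have := hlim.norm
    rw [norm_zero] at this
    exact this.eventually (gt_mem_nhds one_pos)
  have hh0' : ∀ᶠ z in 𝓝 x, h z ≠ 0 := hh.continuousAt.eventually_ne hh0
  have hhd : ∀ᶠ z in 𝓝 x, AnalyticAt ℂ h z := hh.eventually_analyticAt
  filter_upwards [nhdsWithin_le_nhds hsmall, nhdsWithin_le_nhds hh0', nhdsWithin_le_nhds hhd,
    nhdsWithin_le_nhds heq.eventually_nhds, self_mem_nhdsWithin] with z hz1 hz2 hz3 hz4 hz5 hz6
  have hzx : z - x ≠ 0 := sub_ne_zero.2 hz5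
  have hGz : g z - g x = (z - x) ^ m * h z := hz4.self_of_nhds
  have hderiv : deriv g z = m * (z - x) ^ (m - 1) * h z + (z - x) ^ m * deriv h z := by
    have h1 : deriv (fun z => g z - g x) z = deriv g z := deriv_sub_const _
    rw [← h1, EventuallyEq.deriv_eq (f := fun z => (z - x) ^ m • h z) hz4]
    have h2 : HasDerivAt (fun z : ℂ => (z - x) ^ m) (m * (z - x) ^ (m - 1) * 1) z :=
      ((hasDerivAt_id z).sub_const x).pow m
    have h3 := h2.fun_mul hz3.differentiableAt.hasDerivAt
    rw [mul_one] at h3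
    exact h3.deriv
  set q := (z - x) * deriv h z / h z with hq
  have hprod : (z - x) * deriv g z = (g z - g x) * (m + q) := by
    rw [hderiv, hGz, hq]
    obtain ⟨k, rfl⟩ := Nat.exists_eq_succ_of_ne_zero hm
    field_simp
    simp only [Nat.succ_eq_add_one, Nat.add_sub_cancel, pow_succ]
    ring
  have hGre : (g z - g x).re = 0 := by rw [sub_re, hz6, hgx, sub_zero]
  have hGim : (g z - g x).im ≠ 0 := fun him => by
    have : g z - g x = 0 := Complex.ext hGre him
    rw [hGz] at this
    exact mul_ne_zero (pow_ne_zero _ hzx) hz2 this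
  have hqre : (m + q).re ≠ 0 := by
    have h1 := (abs_lt.1 ((abs_re_le_norm q).trans_lt hz1)).1
    rw [add_re, natCast_re]
    linarith
  rw [hprod, mul_im, hGre, zero_mul, zero_add]
  exact mul_ne_zero hGim hqre

theorem TendstoLocallyUniformlyOn.tendsto_prod_nhds {ι : Type*} {F : ι → ℂ → ℂ} {f : ℂ → ℂ}
    {φ : Filter ι} {Ω : Set ℂ} (hΩ : IsOpen Ω) (h : TendstoLocallyUniformlyOn F f φ Ω)
    (hf : ContinuousOn f Ω) {z : ℂ} (hz : z ∈ Ω) :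
    Tendsto (fun p : ι × ℂ => F p.1 p.2) (φ ×ˢ 𝓝 z) (𝓝 (f z)) := by
  have h1 := hΩ.tendstoLocallyUniformlyOn_iff_forall_tendsto.1 h z hz
  have h2 : Tendsto (fun p : ι × ℂ => f p.2) (φ ×ˢ 𝓝 z) (𝓝 (f z)) :=
    (hf.continuousAt (hΩ.mem_nhds hz)).tendsto.comp tendsto_snd
  rw [Metric.tendsto_nhds] at h2 ⊢
  rw [Metric.uniformity_basis_dist.tendsto_right_iff] at h1
  intro ε hε
  filter_upwards [h1 (ε / 2) (by positivity), h2 (ε / 2) (by positivity)] with p hp1 hp2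
  have hp3 : dist (f p.2) (F p.1 p.2) < ε / 2 := hp1
  rw [dist_comm] at hp3
  linarith [dist_triangle (F p.1 p.2) (f p.2) (f z)]

theorem exists_nhds_eventually_abs_le_of_pos {ι : Type*} {φ : Filter ι} {U V U' V' : ι → ℝ → ℝ}
    {θ M b : ℝ} (hU : ∀ k t, HasDerivAt (U k) (U' k t) t)
    (hV : ∀ k t, HasDerivAt (V k) (V' k t) t) (hUM : ∀ k t, |U' k t| ≤ M)
    (hZ : ∀ k t, V k t = 0 → U k t = 0)
    (hVlim : Tendsto (fun p : ι × ℝ => V p.1 p.2) (φ ×ˢ 𝓝 θ) (𝓝 0))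
    (hVlim' : Tendsto (fun p : ι × ℝ => V' p.1 p.2) (φ ×ˢ 𝓝 θ) (𝓝 b)) (hb : 0 < b) :
    ∃ s ∈ 𝓝 θ, ∃ C, ∀ᶠ k in φ, ∀ t ∈ s, |U k t| ≤ C * |V k t| := by
  obtain ⟨P, hP, Q, hQ, hPQ⟩ := eventually_prod_iff.1
    (hVlim'.eventually (lt_mem_nhds (half_lt_self hb)))
  obtain ⟨τ, hτ, hτQ⟩ := Metric.nhds_basis_closedBall.eventually_iff.1 hQ
  rw [Real.closedBall_eq_Icc] at hτQ
  have hsm : ∀ᶠ k in φ, |V k θ| < b / 2 * τ := by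
    have h1 : Tendsto (fun k => V k θ) φ (𝓝 0) :=
      hVlim.comp (tendsto_id.prodMk (tendsto_const_pure.mono_right (pure_le_nhds θ)))
    have h2 := h1.abs
    rw [abs_zero] at h2
    exact h2.eventually (gt_mem_nhds (by positivity))
  refine ⟨Icc (θ - τ) (θ + τ), Icc_mem_nhds (by linarith) (by linarith), M / (b / 2), ?_⟩
  filter_upwards [hP, hsm] with k hk1 hk2
  exact abs_le_mul_abs_of_le_deriv hτ (half_pos hb) (hU k) (hV k) (hUM k)
    (fun t ht => (hPQ hk1 (hτQ ht)).le) hk2 (hZ k)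

theorem exists_nhds_eventually_abs_le {ι : Type*} {φ : Filter ι} {U V U' V' : ι → ℝ → ℝ}
    {θ A M a b : ℝ} (hU : ∀ k t, HasDerivAt (U k) (U' k t) t)
    (hV : ∀ k t, HasDerivAt (V k) (V' k t) t) (hUA : ∀ k t, |U k t| ≤ A)
    (hUM : ∀ k t, |U' k t| ≤ M) (hZ : ∀ k t, V k t = 0 → U k t = 0)
    (hVlim : Tendsto (fun p : ι × ℝ => V p.1 p.2) (φ ×ˢ 𝓝 θ) (𝓝 a))
    (hVlim' : Tendsto (fun p : ι × ℝ => V' p.1 p.2) (φ ×ˢ 𝓝 θ) (𝓝 b)) (hab : a = 0 → b ≠ 0) :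
    ∃ s ∈ 𝓝 θ, ∃ C, ∀ᶠ k in φ, ∀ t ∈ s, |U k t| ≤ C * |V k t| := by
  rcases eq_or_ne a 0 with rfl | ha
  · rcases (hab rfl).lt_or_gt with hb | hb
    · obtain ⟨s, hs, C, hC⟩ := exists_nhds_eventually_abs_le_of_pos hU
        (V := fun k t => -V k t) (V' := fun k t => -V' k t) (fun k t => (hV k t).fun_neg) hUM
        (fun k t h => hZ k t (neg_eq_zero.1 h)) (by simpa using hVlim.neg) hVlim'.neg
        (neg_pos.2 hb)
      exact ⟨s, hs, C, by simpa only [abs_neg] using hC⟩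
    · exact exists_nhds_eventually_abs_le_of_pos hU hV hUM hZ hVlim hVlim' hb
  · have ha' := abs_pos.2 ha
    obtain ⟨P, hP, Q, hQ, hPQ⟩ := eventually_prod_iff.1
      (hVlim.abs.eventually (lt_mem_nhds (half_lt_self ha')))
    refine ⟨_, hQ, A / (|a| / 2), ?_⟩
    filter_upwards [hP] with k hk t ht
    have h1 := hPQ hk ht
    have hA : 0 ≤ A := (abs_nonneg _).trans (hUA k t)
    calc |U k t| ≤ A := hUA k t
      _ = A / (|a| / 2) * (|a| / 2) := by field_simp
      _ ≤ A / (|a| / 2) * |V k t| := by gcongr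

theorem hasDerivAt_re_comp_circleMap {f : ℂ → ℂ} (hf : DifferentiableOn ℂ f (ball 0 1)) {x : ℂ}
    {ρ : ℝ} (hρ : 0 ≤ ρ) (hx : closedBall x ρ ⊆ ball 0 1) (t : ℝ) :
    HasDerivAt (fun t => (f (circleMap x ρ t)).re)
      (deriv f (circleMap x ρ t) * (circleMap 0 ρ t * I)).re t := by
  have h1 := (hf.differentiableAt (isOpen_ball.mem_nhds
    (hx (circleMap_mem_closedBall x hρ t)))).hasDerivAt
  exact reCLM.hasFDerivAt.comp_hasDerivAt t (h1.comp t (hasDerivAt_circleMap x ρ t))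

/-- Near each point, the functions `Re F k` are uniformly dominated by the functions `Re G k`, if
the zeros of the latter are zeros of the former and the `G k` converge to a nondegenerate limit. -/
theorem exists_ball_eventually_abs_re_le {ι : Type*} {φ : Filter ι} [φ.NeBot] {F G : ι → ℂ → ℂ}
    {g : ℂ → ℂ} (hF : ∀ k, DifferentiableOn ℂ (F k) (ball 0 1))
    (hG : ∀ k, DifferentiableOn ℂ (G k) (ball 0 1))
    (hFb : ∀ R < 1, ∃ B, ∀ k, ∀ z ∈ ball (0 : ℂ) R, ‖F k z‖ ≤ B)
    (hGg : TendstoLocallyUniformlyOn G g φ (ball 0 1))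
    (hne : ∃ z ∈ ball (0 : ℂ) 1, (g z).re ≠ 0)
    (hZ : ∀ k, ∀ z ∈ ball (0 : ℂ) 1, (G k z).re = 0 → (F k z).re = 0) {x : ℂ}
    (hx : x ∈ ball (0 : ℂ) 1) :
    ∃ ρ > 0, ∃ C, ∀ᶠ k in φ, ∀ z ∈ ball x ρ, |(F k z).re| ≤ C * |(G k z).re| := by
  have hg : DifferentiableOn ℂ g (ball 0 1) :=
    hGg.differentiableOn (Eventually.of_forall hG) isOpen_ball
  have hx1 : ‖x‖ < 1 := mem_ball_zero_iff.1 hx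
  -- it suffices to bound the quotient on a circle
  obtain ⟨ρ, hρ, hρx, hρZ⟩ : ∃ ρ > 0, 2 * ρ < 1 - ‖x‖ ∧
      ∀ z ∈ sphere x ρ, (g z).re = 0 → ((z - x) * deriv g z).im ≠ 0 := by
    by_cases hgx : (g x).re = 0
    · have h1 := eventually_im_sub_mul_deriv_ne_zero hg hx hgx hne
      rw [eventually_nhdsWithin_iff, Metric.eventually_nhds_iff] at h1
      obtain ⟨ε, hε, h1⟩ := h1
      refine ⟨min (ε / 2) ((1 - ‖x‖) / 4), lt_min (by positivity) (by linarith),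
        by linarith [min_le_right (ε / 2) ((1 - ‖x‖) / 4)], fun z hz => ?_⟩
      have hz' : dist z x = _ := mem_sphere.1 hz
      refine h1 (by rw [hz']; linarith [min_le_left (ε / 2) ((1 - ‖x‖) / 4)]) fun h => ?_
      rw [mem_singleton_iff] at h
      rw [h, dist_self] at hz'
      exact (lt_min (by positivity) (by linarith : 0 < (1 - ‖x‖) / 4)).ne hz'
    · have h1 : ∀ᶠ z in 𝓝 x, (g z).re ≠ 0 :=
        (continuous_re.continuousAt.comp
          (hg.continuousOn.continuousAt (isOpen_ball.mem_nhds hx))).eventually_ne hgx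
      rw [Metric.eventually_nhds_iff] at h1
      obtain ⟨ε, hε, h1⟩ := h1
      refine ⟨min (ε / 2) ((1 - ‖x‖) / 4), lt_min (by positivity) (by linarith),
        by linarith [min_le_right (ε / 2) ((1 - ‖x‖) / 4)], fun z hz h => ?_⟩
      have hz' : dist z x = _ := mem_sphere.1 hz
      exact absurd h (h1 (by rw [hz']; linarith [min_le_left (ε / 2) ((1 - ‖x‖) / 4)]))
  have hsub : closedBall x ρ ⊆ ball 0 1 := fun z hz => by
    rw [mem_ball_zero_iff]
    have := mem_closedBall_iff_norm.1 hz
    linarith [norm_le_norm_add_norm_sub' z x]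
  obtain ⟨B, hB⟩ := hFb (‖x‖ + 2 * ρ) (by linarith)
  have hc : ∀ t, circleMap x ρ t ∈ closedBall x ρ := circleMap_mem_closedBall x hρ.le
  have hcn : ∀ t, ‖circleMap x ρ t‖ ≤ ‖x‖ + ρ := fun t => by
    have := mem_closedBall_iff_norm.1 (hc t)
    linarith [norm_le_norm_add_norm_sub' (circleMap x ρ t) x]
  have hFA : ∀ k t, |(F k (circleMap x ρ t)).re| ≤ B := fun k t =>
    (abs_re_le_norm _).trans (hB k _ (mem_ball_zero_iff.2 (by linarith [hcn t])))
  have hFM : ∀ k t, |(deriv (F k) (circleMap x ρ t) * (circleMap 0 ρ t * I)).re| ≤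
      B / (ρ / 2) * ρ := fun k t => by
    have hsub' : closedBall (circleMap x ρ t) (ρ / 2) ⊆ ball 0 (‖x‖ + 2 * ρ) := fun w hw => by
      rw [mem_ball_zero_iff]
      have := mem_closedBall_iff_norm.1 hw
      linarith [norm_le_norm_add_norm_sub' w (circleMap x ρ t), hcn t]
    have h1 := norm_deriv_le_of_forall_mem_sphere_norm_le (half_pos hρ)
      ((hF k).mono ((closure_ball_subset_closedBall.trans hsub').trans
        (ball_subset_ball (by linarith)))).diffContOnCl
      (fun w hw => hB k w (hsub' (sphere_subset_closedBall hw)))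
    refine (abs_re_le_norm _).trans ?_
    rw [norm_mul, norm_mul, norm_I, mul_one, norm_circleMap_zero, abs_of_pos hρ]
    gcongr
  have hcont : ∀ t, Tendsto (Prod.map id (circleMap x ρ)) (φ ×ˢ 𝓝 t)
      (φ ×ˢ 𝓝 (circleMap x ρ t)) := fun t =>
    tendsto_id.prodMap (continuous_circleMap x ρ).continuousAt
  have hloc : ∀ t, ∃ s ∈ 𝓝 t, ∃ C, ∀ᶠ k in φ, ∀ t ∈ s,
      |(F k (circleMap x ρ t)).re| ≤ C * |(G k (circleMap x ρ t)).re| := fun t => by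
    have ht := hsub (hc t)
    refine exists_nhds_eventually_abs_le
      (fun k t => hasDerivAt_re_comp_circleMap (hF k) hρ.le hsub t)
      (fun k t => hasDerivAt_re_comp_circleMap (hG k) hρ.le hsub t) hFA hFM
      (fun k t h => hZ k _ (hsub (hc t)) h)
      (a := (g (circleMap x ρ t)).re)
      (b := (deriv g (circleMap x ρ t) * (circleMap 0 ρ t * I)).re) ?_ ?_ fun h => ?_
    · exact (continuous_re.tendsto _).comp
        ((hGg.tendsto_prod_nhds isOpen_ball hg.continuousOn ht).comp (hcont t))
    · refine (continuous_re.tendsto _).comp (Tendsto.mul ?_ ?_)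
      · exact (((hGg.deriv (Eventually.of_forall hG) isOpen_ball).tendsto_prod_nhds isOpen_ball
          (hg.deriv isOpen_ball).continuousOn ht).comp (hcont t))
      · exact (((continuous_circleMap 0 ρ).mul continuous_const).tendsto t).comp tendsto_snd
    · have h1 := hρZ _ (circleMap_mem_sphere x hρ.le t) h
      rw [circleMap_sub_center] at h1
      contrapose! h1
      rw [← mul_assoc, mul_I_re, neg_eq_zero] at h1
      rw [mul_comm]
      exact h1
  obtain ⟨C, hC⟩ : ∃ C, ∀ᶠ k in φ, ∀ t ∈ Icc (-Real.pi) Real.pi,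
      |(F k (circleMap x ρ t)).re| ≤ C * |(G k (circleMap x ρ t)).re| := by
    refine isCompact_Icc.induction_on (p := fun s => ∃ C, ∀ᶠ k in φ, ∀ t ∈ s,
      |(F k (circleMap x ρ t)).re| ≤ C * |(G k (circleMap x ρ t)).re|) ?_ ?_ ?_ ?_
    · exact ⟨0, Eventually.of_forall fun k t ht => ht.elim⟩
    · rintro s t hst ⟨C, hC⟩
      exact ⟨C, hC.mono fun k hk r hr => hk r (hst hr)⟩
    · rintro s t ⟨C, hC⟩ ⟨D, hD⟩
      refine ⟨max C D, ?_⟩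
      filter_upwards [hC, hD] with k hk1 hk2 r hr
      rcases hr with hr | hr
      · exact (hk1 r hr).trans (by gcongr; exact le_max_left _ _)
      · exact (hk2 r hr).trans (by gcongr; exact le_max_right _ _)
    · intro t _
      obtain ⟨s, hs, h⟩ := hloc t
      exact ⟨s, mem_nhdsWithin_of_mem_nhds hs, h⟩
  refine ⟨ρ, hρ, C, hC.mono fun k hk z hz => abs_re_le_mul_abs_re_of_forall_mem_sphere (hF k)
    (hG k) (hZ k) hsub (fun w hw => ?_) hz⟩
  have hw' : circleMap x ρ (arg (w - x)) = w := by
    have h1 := norm_mul_exp_arg_mul_I (w - x)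
    rw [mem_sphere_iff_norm.1 hw] at h1
    rw [circleMap, h1, add_sub_cancel]
  have := hk (arg (w - x)) ⟨(neg_pi_lt_arg _).le, arg_le_pi _⟩
  rwa [hw'] at this

theorem exists_tendsto_of_forall_mem_isCompact {ι α : Type*} [TopologicalSpace α]
    (φ : Ultrafilter ι) {K : Set α} (hK : IsCompact K) {x : ι → α} (hx : ∀ k, x k ∈ K) :
    ∃ a ∈ K, Tendsto x φ (𝓝 a) :=
  hK.ultrafilter_le_nhds (φ.map x) (le_principal_iff.2 (Ultrafilter.mem_map.2
    (Filter.univ_mem' hx)))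

/-- Montel's theorem, along an ultrafilter. -/
theorem exists_tendstoLocallyUniformlyOn_ultrafilter {ι : Type*} (φ : Ultrafilter ι)
    {F : ι → ℂ → ℂ} (hF : ∀ k, DifferentiableOn ℂ (F k) (ball 0 1))
    (hFb : ∀ R < 1, ∃ B, ∀ k, ∀ z ∈ ball (0 : ℂ) R, ‖F k z‖ ≤ B) :
    ∃ f, TendstoLocallyUniformlyOn F f φ (ball 0 1) := by
  have hlim : ∀ z : ℂ, ∃ a, z ∈ ball (0 : ℂ) 1 → Tendsto (fun k => F k z) φ (𝓝 a) := fun z => by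
    by_cases hz : z ∈ ball (0 : ℂ) 1
    · rw [mem_ball_zero_iff] at hz
      obtain ⟨B, hB⟩ := hFb ((1 + ‖z‖) / 2) (by linarith)
      obtain ⟨a, -, ha⟩ := exists_tendsto_of_forall_mem_isCompact φ
        (isCompact_closedBall (0 : ℂ) B) (x := fun k => F k z) (fun k =>
          mem_closedBall_zero_iff.2 (hB k z (mem_ball_zero_iff.2 (by linarith))))
      exact ⟨a, fun _ => ha⟩
    · exact ⟨0, fun h => absurd h hz⟩
  choose f hf using hlim
  refine ⟨f, Metric.tendstoLocallyUniformlyOn_iff.2 fun ε hε x hx => ?_⟩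
  have hx1 := mem_ball_zero_iff.1 hx
  obtain ⟨B, hB⟩ := hFb ((1 + ‖x‖) / 2) (by linarith)
  obtain ⟨r, hr⟩ : ∃ r, r = (1 - ‖x‖) / 4 := ⟨_, rfl⟩
  have hr0 : 0 < r := by linarith
  obtain ⟨L, hL⟩ : ∃ L, L = max (B / r) 0 := ⟨_, rfl⟩
  have hL0 : 0 ≤ L := hL ▸ le_max_right _ _
  have hball : ball x r ⊆ ball 0 1 := fun w hw => by
    rw [mem_ball_zero_iff]
    have := mem_ball_iff_norm.1 hw
    linarith [norm_le_norm_add_norm_sub' w x]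
  have hlip : ∀ k, ∀ w ∈ ball x r, ‖F k w - F k x‖ ≤ L * ‖w - x‖ := fun k w hw => by
    refine (convex_ball x r).norm_image_sub_le_of_norm_deriv_le (𝕜 := ℂ)
      (fun v hv => (hF k).differentiableAt (isOpen_ball.mem_nhds (hball hv))) (fun v hv => ?_)
      (mem_ball_self hr0) hw
    have hv' := mem_ball_iff_norm.1 hv
    have hsub : closedBall v r ⊆ ball 0 ((1 + ‖x‖) / 2) := fun w hw => by
      rw [mem_ball_zero_iff]
      have := mem_closedBall_iff_norm.1 hw
      linarith [norm_le_norm_add_norm_sub' w v, norm_le_norm_add_norm_sub' v x]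
    rw [hL]
    exact (norm_deriv_le_of_forall_mem_sphere_norm_le hr0
      ((hF k).mono ((closure_ball_subset_closedBall.trans hsub).trans
        (ball_subset_ball (by linarith)))).diffContOnCl
      (fun w hw => hB k w (hsub (sphere_subset_closedBall hw)))).trans (le_max_left _ _)
  have hlipf : ∀ w ∈ ball x r, ‖f w - f x‖ ≤ L * ‖w - x‖ := fun w hw =>
    le_of_tendsto ((hf w (hball hw)).sub (hf x hx)).norm
      (Eventually.of_forall fun k => hlip k w hw)
  obtain ⟨δ, hδ, hδr, hδL⟩ : ∃ δ > 0, δ ≤ r ∧ L * δ < ε / 3 := by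
    refine ⟨min r (ε / 3 / (L + 1)), lt_min hr0 (by positivity), min_le_left _ _, ?_⟩
    calc L * min r (ε / 3 / (L + 1)) ≤ L * (ε / 3 / (L + 1)) := by gcongr; exact min_le_right _ _
      _ < (L + 1) * (ε / 3 / (L + 1)) := by gcongr; linarith
      _ = ε / 3 := by field_simp
  refine ⟨ball x δ, mem_nhdsWithin_of_mem_nhds (ball_mem_nhds x hδ), ?_⟩
  filter_upwards [(hf x hx).eventually (ball_mem_nhds (f x) (by positivity : 0 < ε / 3))]
    with k hk w hw
  have hwr := ball_subset_ball hδr hw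
  have hk' : ‖F k x - f x‖ < ε / 3 := mem_ball_iff_norm.1 hk
  have hw' : L * ‖w - x‖ ≤ L * δ := by gcongr; exact (mem_ball_iff_norm.1 hw).le
  have h1 := hlip k w hwr
  have h2 := hlipf w hwr
  rw [dist_eq_norm]
  calc ‖f w - F k w‖ = ‖(f w - f x) - (F k w - F k x) - (F k x - f x)‖ := by congr 1; ring
    _ ≤ ‖f w - f x‖ + ‖F k w - F k x‖ + ‖F k x - f x‖ :=
      (norm_sub_le _ _).trans (by gcongr; exact norm_sub_le _ _)
    _ < ε := by linarith

/-- Holomorphic functions with labelled nodal domains, normalized to have real part of maximum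
modulus one on the disc of radius one half. -/
structure IsNormalizedNodal {N : ℕ} (f : ℂ → ℂ) (κ : ℂ → Fin N) : Prop where
  differentiableOn : DifferentiableOn ℂ f (ball 0 1)
  im_zero : (f 0).im = 0
  abs_re_le : ∀ z ∈ closedBall (0 : ℂ) (1 / 2), |(f z).re| ≤ 1
  exists_abs_re_eq : ∃ z ∈ closedBall (0 : ℂ) (1 / 2), |(f z).re| = 1
  isNodalLabelling : IsNodalLabelling f κ

theorem IsNormalizedNodal.exists_bound (N : ℕ) {R : ℝ} (hR : R < 1) :
    ∃ B, ∀ (f : ℂ → ℂ) (κ : ℂ → Fin N), IsNormalizedNodal f κ →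
      ∀ z ∈ ball (0 : ℂ) R, ‖f z‖ ≤ B := by
  obtain ⟨B, hB⟩ := exists_bound_of_isNodalLabelling N (r := 1 / 4) (R := max R (1 / 4))
    (by norm_num) (le_max_right _ _) (max_lt hR (by norm_num)) 5
  refine ⟨B, fun f κ hf z hz => hB f hf.differentiableOn κ hf.isNodalLabelling (fun w hw => ?_) z
    (ball_subset_ball (le_max_left _ _) hz)⟩
  have h0 : ‖f 0‖ ≤ 1 := by
    have h1 := hf.abs_re_le 0 (mem_closedBall_self (by norm_num))
    have h2 := norm_le_abs_re_add_abs_im (f 0)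
    rw [hf.im_zero, abs_zero] at h2
    linarith
  have hw' := mem_ball_zero_iff.1 hw
  have h1 := borelCaratheodory (f := f) (z := w) (M := 1) (R := 1 / 2) one_pos
    (hf.differentiableOn.mono (ball_subset_ball (by norm_num)))
    (fun v hv => (le_abs_self _).trans (hf.abs_re_le v (ball_subset_closedBall hv)))
    (by norm_num) (mem_ball_zero_iff.2 (by linarith))
  have h2 : 0 < 1 / 2 - ‖w‖ := by linarith
  refine h1.trans ?_
  rw [← add_div, div_le_iff₀ h2]
  nlinarith [norm_nonneg w, norm_nonneg (f 0)]

theorem IsNormalizedNodal.exists_forall_abs_re_le (N : ℕ) {K : Set ℂ} (hK : IsCompact K)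
    (hKD : K ⊆ ball 0 1) :
    ∃ C, ∀ (f g : ℂ → ℂ) (κ : ℂ → Fin N), IsNormalizedNodal f κ → IsNormalizedNodal g κ →
      (∀ z ∈ ball (0 : ℂ) 1, (g z).re = 0 → (f z).re = 0) →
      ∀ z ∈ K, |(f z).re| ≤ C * |(g z).re| := by
  by_contra! hcon
  choose F G κ hF hG hZ x hxK hx using fun k : ℕ => hcon k
  have hbd : ∀ {H : ℕ → ℂ → ℂ}, (∀ k, IsNormalizedNodal (H k) (κ k)) →
      ∀ R < 1, ∃ B, ∀ k, ∀ z ∈ ball (0 : ℂ) R, ‖H k z‖ ≤ B := fun hH R hR => by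
    obtain ⟨B, hB⟩ := IsNormalizedNodal.exists_bound N hR
    exact ⟨B, fun k => hB _ _ (hH k)⟩
  have hGd := fun k => (hG k).differentiableOn
  obtain ⟨g, hg⟩ := exists_tendstoLocallyUniformlyOn_ultrafilter (hyperfilter ℕ) hGd (hbd hG)
  have hgd : DifferentiableOn ℂ g (ball 0 1) :=
    hg.differentiableOn (Eventually.of_forall hGd) isOpen_ball
  obtain ⟨x₀, hx₀, hxlim⟩ := exists_tendsto_of_forall_mem_isCompact (hyperfilter ℕ) hK hxK
  have hne : ∃ z ∈ ball (0 : ℂ) 1, (g z).re ≠ 0 := by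
    choose y hy hy1 using fun k => (hG k).exists_abs_re_eq
    obtain ⟨y₀, hy₀, hylim⟩ := exists_tendsto_of_forall_mem_isCompact (hyperfilter ℕ)
      (isCompact_closedBall (0 : ℂ) (1 / 2)) hy
    have hyD : y₀ ∈ ball (0 : ℂ) 1 := closedBall_subset_ball (by norm_num) hy₀
    have h1 := (hg.tendsto_prod_nhds isOpen_ball hgd.continuousOn hyD).comp
      (tendsto_id.prodMk hylim)
    have h2 := ((continuous_re.tendsto _).comp h1).abs
    have h3 := tendsto_nhds_unique h2 (tendsto_const_nhds.congr fun k => (hy1 k).symm)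
    exact ⟨y₀, hyD, fun h => by simp [h] at h3⟩
  obtain ⟨ρ, hρ, C, hC⟩ := exists_ball_eventually_abs_re_le (fun k => (hF k).differentiableOn) hGd
    (hbd hF) hg hne hZ (hKD hx₀)
  have hlarge : ∀ᶠ k : ℕ in hyperfilter ℕ, C ≤ k :=
    Nat.hyperfilter_le_atTop (tendsto_natCast_atTop_atTop.eventually_ge_atTop C)
  obtain ⟨k, hk1, hk2, hk3⟩ :=
    (hC.and ((hxlim.eventually (ball_mem_nhds x₀ hρ)).and hlarge)).exists
  have h1 := hk1 _ hk2
  have h2 := hx k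
  have h3 : C * |(G k (x k)).re| ≤ k * |(G k (x k)).re| := by gcongr
  linarith

theorem IsNodalLabelling.congr {N : ℕ} {f g : ℂ → ℂ} {κ : ℂ → Fin N} (hf : IsNodalLabelling f κ)
    (hZ : ∀ z ∈ ball (0 : ℂ) 1, (f z).re = 0 ↔ (g z).re = 0) : IsNodalLabelling g κ :=
  fun x hx y hy hgx hgy hκ =>
    (hf x hx y hy (mt (hZ x hx).1 hgx) (mt (hZ y hy).1 hgy) hκ).mono fun z hz =>
      ⟨hz.1, mt (hZ z hz.1).2 hz.2⟩

theorem exists_re_ne_zero_of_mem_closedBall_half {f : ℂ → ℂ} (hf : DifferentiableOn ℂ f (ball 0 1))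
    (hne : ∃ z ∈ ball (0 : ℂ) 1, (f z).re ≠ 0) : ∃ z ∈ closedBall (0 : ℂ) (1 / 2), (f z).re ≠ 0 := by
  by_contra! h
  rcases (hf.analyticOnNhd isOpen_ball).is_constant_or_isOpen (convex_ball _ _).isPreconnected with
    ⟨w, hw⟩ | hopen
  · obtain ⟨z, hz, hz0⟩ := hne
    rw [hw z hz, ← hw 0 (mem_ball_self one_pos)] at hz0
    exact hz0 (h 0 (mem_closedBall_self (by norm_num)))
  · have h1 := hopen (ball 0 (1 / 2)) (ball_subset_ball (by norm_num)) isOpen_ball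
    obtain ⟨ε, hε, h2⟩ := Metric.isOpen_iff.1 h1 (f 0)
      (mem_image_of_mem f (mem_ball_self (by norm_num)))
    obtain ⟨z, hz, hz1⟩ := h2 (show f 0 + (ε / 2 : ℝ) ∈ ball (f 0) ε by
      rw [mem_ball_iff_norm, add_sub_cancel_left, norm_real, Real.norm_eq_abs, abs_of_pos]
      <;> linarith)
    have h3 := h z (ball_subset_closedBall hz)
    rw [hz1, add_re, h 0 (mem_closedBall_self (by norm_num)), ofReal_re] at h3
    linarith

theorem exists_isNormalizedNodal {N : ℕ} {f : ℂ → ℂ} {κ : ℂ → Fin N}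
    (hf : DifferentiableOn ℂ f (ball 0 1)) (hne : ∃ z ∈ ball (0 : ℂ) 1, (f z).re ≠ 0)
    (hκ : IsNodalLabelling f κ) :
    ∃ α > 0, ∃ F : ℂ → ℂ, IsNormalizedNodal F κ ∧ ∀ z, (F z).re = (f z).re / α := by
  obtain ⟨z₀, hz₀, hmax⟩ := (isCompact_closedBall (0 : ℂ) (1 / 2)).exists_isMaxOn
    (nonempty_closedBall.2 (by norm_num)) (f := fun z => |(f z).re|)
    (continuous_abs.comp_continuousOn (continuous_re.comp_continuousOn
      (hf.continuousOn.mono (closedBall_subset_ball (by norm_num)))))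
  obtain ⟨α, hα⟩ : ∃ α, α = |(f z₀).re| := ⟨_, rfl⟩
  have hmax' : ∀ z ∈ closedBall (0 : ℂ) (1 / 2), |(f z).re| ≤ α := fun z hz => hα ▸ hmax hz
  have hα0 : 0 < α := by
    obtain ⟨z, hz, hz0⟩ := exists_re_ne_zero_of_mem_closedBall_half hf hne
    exact (abs_pos.2 hz0).trans_le (hmax' z hz)
  have hre : ∀ z, ((f z - (f 0).im * I) / α).re = (f z).re / α := fun z => by
    rw [div_ofReal_re]; simp
  refine ⟨α, hα0, fun z => (f z - (f 0).im * I) / α, ⟨(hf.sub_const _).div_const _, ?_,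
    fun z hz => ?_, ⟨z₀, hz₀, ?_⟩, hκ.congr fun z _ => ?_⟩, hre⟩
  · rw [div_ofReal_im]; simp
  · rw [hre, abs_div, abs_of_pos hα0, div_le_one hα0]
    exact hmax' z hz
  · rw [hre, abs_div, abs_of_pos hα0, ← hα, div_self hα0.ne']
  · rw [hre, div_eq_zero_iff, or_iff_left hα0.ne']

theorem exists_forall_abs_re_div_re_le (N : ℕ) {K : Set ℂ} (hK : IsCompact K)
    (hKD : K ⊆ ball 0 1) :
    ∃ C > 0, ∀ (f g : ℂ → ℂ) (κ : ℂ → Fin N), DifferentiableOn ℂ f (ball 0 1) →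
      DifferentiableOn ℂ g (ball 0 1) → (∃ z ∈ ball (0 : ℂ) 1, (f z).re ≠ 0) →
      (∃ z ∈ ball (0 : ℂ) 1, (g z).re ≠ 0) →
      (∀ z ∈ ball (0 : ℂ) 1, (f z).re = 0 ↔ (g z).re = 0) → IsNodalLabelling f κ →
      ∀ z ∈ K, ∀ w ∈ K, (f z).re ≠ 0 → (f w).re ≠ 0 →
        |(f z).re / (g z).re| ≤ C * |(f w).re / (g w).re| := by
  obtain ⟨C₀, hC₀⟩ := IsNormalizedNodal.exists_forall_abs_re_le N hK hKD
  obtain ⟨C, hCdef⟩ : ∃ C, C = max C₀ 1 := ⟨_, rfl⟩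
  have hC0 : 0 < C := hCdef ▸ lt_max_of_lt_right one_pos
  refine ⟨C * C, mul_pos hC0 hC0, fun f g κ hf hg hfne hgne hZ hκ z hz w hw hfz hfw => ?_⟩
  have hC : ∀ F G : ℂ → ℂ, IsNormalizedNodal F κ → IsNormalizedNodal G κ →
      (∀ z ∈ ball (0 : ℂ) 1, (G z).re = 0 → (F z).re = 0) →
      ∀ z ∈ K, |(F z).re| ≤ C * |(G z).re| := fun F G hF hG h z hz =>
    (hC₀ F G κ hF hG h z hz).trans (by rw [hCdef]; gcongr; exact le_max_left _ _)
  obtain ⟨α, hα, F, hF, hFf⟩ := exists_isNormalizedNodal hf hfne hκ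
  obtain ⟨β, hβ, G, hG, hGg⟩ := exists_isNormalizedNodal hg hgne (hκ.congr hZ)
  have hF0 : ∀ z, (F z).re = 0 ↔ (f z).re = 0 := fun z => by
    rw [hFf, div_eq_zero_iff, or_iff_left hα.ne']
  have hG0 : ∀ z, (G z).re = 0 ↔ (g z).re = 0 := fun z => by
    rw [hGg, div_eq_zero_iff, or_iff_left hβ.ne']
  have h1 := hC F G hF hG (fun z hz h => (hF0 z).2 ((hZ z hz).2 ((hG0 z).1 h))) z hz
  have h2 := hC G F hG hF (fun z hz h => (hG0 z).2 ((hZ z hz).1 ((hF0 z).1 h))) w hw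
  rw [hFf, hGg, abs_div, abs_div, abs_of_pos hα, abs_of_pos hβ] at h1 h2
  have hgz : 0 < |(g z).re| := abs_pos.2 (mt (hZ z (hKD hz)).2 hfz)
  have hgw : 0 < |(g w).re| := abs_pos.2 (mt (hZ w (hKD hw)).2 hfw)
  have h3 : |(f z).re| / |(g z).re| ≤ C * (α / β) := by
    rw [div_le_iff₀ hgz]
    rw [div_le_iff₀ hα] at h1
    exact h1.trans_eq (by ring)
  have h4 : α / β ≤ C * (|(f w).re| / |(g w).re|) := by
    rw [div_le_iff₀ hβ] at h2 ⊢
    calc α = α / |(g w).re| * |(g w).re| := by field_simp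
      _ ≤ α / |(g w).re| * (C * (|(f w).re| / α) * β) := by gcongr
      _ = _ := by field_simp
  rw [abs_div, abs_div]
  calc _ ≤ C * (α / β) := h3
    _ ≤ C * (C * (|(f w).re| / |(g w).re|)) := by gcongr
    _ = _ := by ring

theorem HarmonicOnSet.harmonicOnNhd_comp {u : En 2 → ℝ} (hu : HarmonicOnSet u (ball 0 1)) :
    InnerProductSpace.HarmonicOnNhd (u ∘ orthonormalBasisOneI.repr) (ball (0 : ℂ) 1) := by
  intro z hz
  have hmap : ∀ w ∈ ball (0 : ℂ) 1, orthonormalBasisOneI.repr w ∈ ball (0 : En 2) 1 :=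
    fun w hw => by
      rw [mem_ball_zero_iff] at hw ⊢
      rwa [LinearIsometryEquiv.norm_map]
  refine ⟨((hu.1 _ (hmap z hz)).contDiffAt (isOpen_ball.mem_nhds (hmap z hz))).comp z
    (orthonormalBasisOneI.repr.contDiff.contDiffAt), ?_⟩
  filter_upwards [isOpen_ball.mem_nhds hz] with w hw
  rw [InnerProductSpace.laplacian_eq_iteratedFDeriv_orthonormalBasis _ orthonormalBasisOneI,
    Pi.zero_apply, ← hu.2 _ (hmap w hw), laplacianAt]
  refine Finset.sum_congr rfl fun i _ => ?_
  have h1 := orthonormalBasisOneI.repr.toContinuousLinearEquiv.iteratedFDerivWithin_comp_right u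
    uniqueDiffOn_univ (mem_univ (orthonormalBasisOneI.repr w)) 2
  rw [preimage_univ, iteratedFDerivWithin_univ, iteratedFDerivWithin_univ] at h1
  have h2 := congrArg (fun T => T ![orthonormalBasisOneI i, orthonormalBasisOneI i]) h1
  refine h2.trans ?_
  rw [ContinuousMultilinearMap.compContinuousLinearMap_apply]
  congr 1
  ext j : 1
  fin_cases j <;> exact orthonormalBasisOneI.repr_self i

theorem HarmonicOnSet.exists_differentiableOn_re_eq {u : En 2 → ℝ}
    (hu : HarmonicOnSet u (ball 0 1)) :
    ∃ f : ℂ → ℂ, DifferentiableOn ℂ f (ball 0 1) ∧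
      ∀ z ∈ ball (0 : ℂ) 1, (f z).re = u (orthonormalBasisOneI.repr z) := by
  obtain ⟨f, hf, hfu⟩ := hu.harmonicOnNhd_comp.exists_analyticOnNhd_ball_re_eq
  exact ⟨f, hf.differentiableOn, hfu⟩

theorem exists_isNodalLabelling {N : ℕ} {u : En 2 → ℝ} (hu : ContinuousOn u (ball 0 1))
    (hfin : (nodalComponents u (ball 0 1)).Finite) (hN : (nodalComponents u (ball 0 1)).ncard < N)
    {f : ℂ → ℂ} (hf : ∀ z ∈ ball (0 : ℂ) 1, (f z).re = u (orthonormalBasisOneI.repr z)) :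
    ∃ κ : ℂ → Fin N, IsNodalLabelling f κ := by
  set O : Set (En 2) := ball 0 1 \ zeroSet u (ball 0 1) with hO
  have hOmem : ∀ x, x ∈ O ↔ x ∈ ball (0 : En 2) 1 ∧ u x ≠ 0 := fun x =>
    ⟨fun h => ⟨h.1, fun h0 => h.2 ⟨h.1, h0⟩⟩, fun h => ⟨h.1, fun h0 => h.2 h0.2⟩⟩
  have hOo : IsOpen O := by
    have h1 : O = ball (0 : En 2) 1 ∩ u ⁻¹' {0}ᶜ := Set.ext hOmem
    rw [h1]
    exact hu.isOpen_inter_preimage isOpen_ball isOpen_compl_singleton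
  have := hfin.fintype
  obtain ⟨ι⟩ : Nonempty (nodalComponents u (ball 0 1) ↪ Fin N) := by
    refine Function.Embedding.nonempty_of_card_le ?_
    rw [Fintype.card_fin, ← Nat.card_eq_fintype_card]
    exact hN.le
  have hmem : ∀ z : ℂ, z ∈ ball (0 : ℂ) 1 → (f z).re ≠ 0 → orthonormalBasisOneI.repr z ∈ O :=
    fun z hz h => by
      rw [hOmem, mem_ball_zero_iff, LinearIsometryEquiv.norm_map, ← hf z hz]
      exact ⟨mem_ball_zero_iff.1 hz, h⟩
  have hlabel : ∀ z : ℂ, ∃ n : Fin N, ∀ h : orthonormalBasisOneI.repr z ∈ O,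
      n = ι ⟨connectedComponentIn O (orthonormalBasisOneI.repr z), _, h, rfl⟩ := fun z => by
    by_cases h : orthonormalBasisOneI.repr z ∈ O
    · exact ⟨ι ⟨_, _, h, rfl⟩, fun _ => rfl⟩
    · exact ⟨⟨0, by omega⟩, fun h0 => absurd h0 h⟩
  choose κ hκ using hlabel
  refine ⟨κ, fun x hx y hy hfx hfy hxy => ?_⟩
  have hxO := hmem x hx hfx
  have hyO := hmem y hy hfy
  rw [hκ x hxO, hκ y hyO] at hxy
  have heq : connectedComponentIn O (orthonormalBasisOneI.repr x) =
      connectedComponentIn O (orthonormalBasisOneI.repr y) := congrArg Subtype.val (ι.injective hxy)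
  have hpath := (hOo.connectedComponentIn.isConnected_iff_isPathConnected).1
    (isConnected_connectedComponentIn_iff.2 hxO)
  have hj := (hpath.joinedIn _ (mem_connectedComponentIn hxO) _
    (heq ▸ mem_connectedComponentIn hyO)).map orthonormalBasisOneI.repr.symm.continuous
  rw [LinearIsometryEquiv.symm_apply_apply, LinearIsometryEquiv.symm_apply_apply] at hj
  refine hj.mono ?_
  rintro _ ⟨w, hw, rfl⟩
  obtain ⟨h1, h2⟩ := (hOmem w).1 (connectedComponentIn_subset _ _ hw)
  have h3 : orthonormalBasisOneI.repr.symm w ∈ ball (0 : ℂ) 1 := by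
    rw [mem_ball_zero_iff, LinearIsometryEquiv.norm_map]
    exact mem_ball_zero_iff.1 h1
  refine ⟨h3, ?_⟩
  rwa [hf _ h3, LinearIsometryEquiv.apply_symm_apply]

end

theorem stmt0 (N : ℕ) (K : Set (En 2)) (hK : IsCompact K) (hKD : K ⊆ ball (0 : En 2) 1) :
    ∃ C₁ > (0 : ℝ), ∀ u v : En 2 → ℝ,
      HarmonicOnSet u (ball 0 1) → HarmonicOnSet v (ball 0 1) →
      (∃ x ∈ ball (0 : En 2) 1, u x ≠ 0) → (∃ x ∈ ball (0 : En 2) 1, v x ≠ 0) →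
      zeroSet u (ball 0 1) = zeroSet v (ball 0 1) →
      (nodalComponents u (ball 0 1)).Finite →
      (nodalComponents u (ball 0 1)).ncard < N →
      ∀ x ∈ K \ zeroSet u (ball 0 1), ∀ y ∈ K \ zeroSet u (ball 0 1),
        |u x / v x| ≤ C₁ * |u y / v y| := by
  let e := Complex.orthonormalBasisOneI.repr
  have hball : ∀ x ∈ ball (0 : En 2) 1, e.symm x ∈ ball (0 : ℂ) 1 := fun x hx => by
    rw [mem_ball_zero_iff, LinearIsometryEquiv.norm_map]
    exact mem_ball_zero_iff.1 hx
  have hball' : ∀ z ∈ ball (0 : ℂ) 1, e z ∈ ball (0 : En 2) 1 := fun z hz => by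
    rw [mem_ball_zero_iff, LinearIsometryEquiv.norm_map]
    exact mem_ball_zero_iff.1 hz
  obtain ⟨C, hC0, hC⟩ := exists_forall_abs_re_div_re_le N (hK.image e.symm.continuous)
    (image_subset_iff.2 fun x hx => hball x (hKD hx))
  refine ⟨C, hC0, fun u v hu hv hune hvne hZ hfin hN x hx y hy => ?_⟩
  obtain ⟨f, hf, hfu⟩ := hu.exists_differentiableOn_re_eq
  obtain ⟨g, hg, hgv⟩ := hv.exists_differentiableOn_re_eq
  obtain ⟨κ, hκ⟩ := exists_isNodalLabelling hu.1.continuousOn hfin hN hfu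
  have hfu' : ∀ x ∈ ball (0 : En 2) 1, (f (e.symm x)).re = u x := fun x hx => by
    rw [hfu _ (hball x hx), LinearIsometryEquiv.apply_symm_apply]
  have hgv' : ∀ x ∈ ball (0 : En 2) 1, (g (e.symm x)).re = v x := fun x hx => by
    rw [hgv _ (hball x hx), LinearIsometryEquiv.apply_symm_apply]
  obtain ⟨p, hp, hup⟩ := hune
  obtain ⟨q, hq, hvq⟩ := hvne
  have h := hC f g κ hf hg ⟨e.symm p, hball p hp, by rwa [hfu' p hp]⟩
    ⟨e.symm q, hball q hq, by rwa [hgv' q hq]⟩ (fun z hz => by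
      have h1 := Set.ext_iff.1 hZ (e z)
      rw [hfu z hz, hgv z hz]
      exact ⟨fun h => (h1.1 ⟨hball' z hz, h⟩).2, fun h => (h1.2 ⟨hball' z hz, h⟩).2⟩) hκ
    _ (mem_image_of_mem _ hx.1) _ (mem_image_of_mem _ hy.1)
    (by rw [hfu' x (hKD hx.1)]; exact fun h => hx.2 ⟨hKD hx.1, h⟩)
    (by rw [hfu' y (hKD hy.1)]; exact fun h => hy.2 ⟨hKD hy.1, h⟩)
  rwa [hfu' x (hKD hx.1), hgv' x (hKD hx.1), hfu' y (hKD hy.1), hgv' y (hKD hy.1)] at h
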